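/- Let G ↷ (X, μ) be a pmp action of a countable group, let F be a G-invariant sub-σ-algebra, and let ξ be a collection of Borel subsets of X. If (Σ_n)_{n∈ℕ} is an increasing sequence of G-invariant sub-σ-algebras such that ξ ⊆ ⋁_{n∈ℕ} Σ_n ∨ F modulo μ-null sets, then rh_{G,μ}(ξ | F) ≤ rh_{G,μ}(Σ_1 | F) + ∑_{n≥2} rh_{G,μ}(Σ_n | Σ_{n−1} ∨ F). -/

import Mathlib

open MeasureTheory Set Function
open scoped ENNReal symmDiff

/-- A set in a measurable space is *analytic* if it is the image of a Borel subset of a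
standard Borel space under a Borel (measurable) map. -/
def IsAnalyticS {W : Type*} [MeasurableSpace W] (A : Set W) : Prop :=
  ∃ (Z : Type) (mZ : MeasurableSpace Z), @StandardBorelSpace Z mZ ∧
    ∃ (B : Set Z) (f : Z → W), MeasurableSet[mZ] B ∧ @Measurable Z W mZ _ f ∧ f '' B = A

/-- The smallest `G`-invariant sub-σ-algebra containing the collection `ξ`. -/
def sigmaG (G : Type*) {X : Type*} [Group G] [MulAction G X] (ξ : Set (Set X)) :
    MeasurableSpace X :=
  MeasurableSpace.generateFrom {B | ∃ (g : G), ∃ A ∈ ξ, B = (fun x => g • x) ⁻¹' A}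

/-- The σ-algebra of `G`-invariant measurable sets. -/
def invSigma (G X : Type*) [Group G] [MulAction G X] [MeasurableSpace X] :
    MeasurableSpace X :=
  MeasurableSpace.generateFrom {A | MeasurableSet A ∧ ∀ g : G, (fun x => g • x) ⁻¹' A = A}

/-- Conditional Shannon entropy `H_μ(α | m)` of a countable partition `α` given a
sub-σ-algebra `m`, valued in `[0,∞]`. -/
noncomputable def condEnt {X : Type*} (m : MeasurableSpace X) [mX : MeasurableSpace X]
    (μ : Measure X) {ι : Type*} (α : ι → Set X) : ℝ≥0∞ :=
  ∫⁻ x, ∑' i, ENNReal.ofReal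
    (Real.negMulLog ((μ[(α i).indicator (fun _ => (1 : ℝ)) | m]) x)) ∂μ

/-- Shannon entropy `H_μ(α)` of a countable partition. -/
noncomputable def shEnt {X : Type*} [MeasurableSpace X] (μ : Measure X)
    {ι : Type*} (α : ι → Set X) : ℝ≥0∞ :=
  ∑' i, ENNReal.ofReal (Real.negMulLog (μ (α i)).toReal)

/-- `α` is a countable Borel partition of `X` (indexed by `ℕ`, cells may be empty). -/
def IsPartition {X : Type*} [MeasurableSpace X] (α : ℕ → Set X) : Prop :=
  (∀ i, MeasurableSet (α i)) ∧ Pairwise (Function.onFun Disjoint α) ∧ (⋃ i, α i) = univ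

/-- Every set of `ξ` agrees with an `m`-measurable set modulo `μ`-null sets. -/
def SubsetMod {X : Type*} (m : MeasurableSpace X) [mX : MeasurableSpace X] (μ : Measure X)
    (ξ : Set (Set X)) : Prop :=
  ∀ A ∈ ξ, ∃ B, MeasurableSet[m] B ∧ μ (A ∆ B) = 0

/-- Outer Rokhlin entropy `rh_{G,μ}(ξ | F)`. -/
noncomputable def outerRokhlin (G : Type*) {X : Type*} (ξ : Set (Set X))
    (F : MeasurableSpace X) [Group G] [MulAction G X] [mX : MeasurableSpace X]
    (μ : Measure X) : ℝ≥0∞ :=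
  sInf { h | ∃ α : ℕ → Set X, IsPartition α ∧
      SubsetMod (sigmaG G (Set.range α) ⊔ F ⊔ invSigma G X) μ ξ ∧
      h = condEnt (F ⊔ invSigma G X) μ α }

/-- Rokhlin entropy `rh_G(X, μ | F)`. -/
noncomputable def rokhlin (G : Type*) {X : Type*} (F : MeasurableSpace X) [Group G]
    [MulAction G X] [mX : MeasurableSpace X] (μ : Measure X) : ℝ≥0∞ :=
  outerRokhlin G {A | MeasurableSet A} F μ

/-- Outer Rokhlin entropy `rh_{G,μ}(S | F)` of a sub-σ-algebra `S`. -/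
noncomputable def outerRokhlinAlg (G : Type*) {X : Type*} (S F : MeasurableSpace X) [Group G]
    [MulAction G X] [mX : MeasurableSpace X] (μ : Measure X) : ℝ≥0∞ :=
  outerRokhlin G {A | MeasurableSet[S] A} F μ

/-- The action of `G` on `(X, μ)` is probability-measure-preserving. -/
def IsPmp (G : Type*) {X : Type*} [Group G] [MulAction G X] [MeasurableSpace X]
    (μ : Measure X) : Prop :=
  ∀ g : G, MeasurePreserving (fun x => g • x) μ μ

/-- Aperiodicity: μ-almost-every `G`-orbit is infinite. -/
def Aperiodic (G : Type*) {X : Type*} [Group G] [MulAction G X] [MeasurableSpace X]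
    (μ : Measure X) : Prop :=
  ∀ᵐ x ∂μ, (MulAction.orbit G x).Infinite

/-- Ergodicity of a measure: every invariant Borel set is null or conull. -/
def IsErgodicInv (G : Type*) {X : Type*} [Group G] [MulAction G X] [MeasurableSpace X]
    (ν : Measure X) : Prop :=
  ∀ A : Set X, MeasurableSet A → (∀ g : G, (fun x => g • x) ⁻¹' A = A) → ν A = 0 ∨ ν A = 1

/-- `F` is a `G`-invariant σ-algebra. -/
def InvariantAlg (G : Type*) {X : Type*} (F : MeasurableSpace X) [Group G] [MulAction G X] :
    Prop :=
  ∀ (g : G) (A : Set X), MeasurableSet[F] A → MeasurableSet[F] ((fun x => g • x) ⁻¹' A)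

/-- `F` is countably generated. -/
def CountablyGen {X : Type*} (F : MeasurableSpace X) : Prop :=
  ∃ S : Set (Set X), S.Countable ∧ F = MeasurableSpace.generateFrom S

/-- `π` is an ergodic decomposition map for `μ`. -/
def IsErgDecomp (G : Type*) {X : Type*} [Group G] [MulAction G X] [MeasurableSpace X]
    (μ : Measure X) (π : X → Measure X) : Prop :=
  Measurable π ∧
  (∀ x, IsProbabilityMeasure (π x) ∧ IsPmp G (π x) ∧ IsErgodicInv G (π x)) ∧
  (∀ (g : G) (x : X), π (g • x) = π x) ∧
  (∀ ν : Measure X, IsProbabilityMeasure ν → IsPmp G ν → IsErgodicInv G ν →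
      ν {x | π x = ν} = 1) ∧
  (∀ B : Set X, MeasurableSet B → μ B = ∫⁻ x, π x B ∂μ)



/-! ### Part 1: code lengths -/

/-- `exp (-l)`, extended by `0` at `⊤`. -/
noncomputable def kex (l : ℝ≥0∞) : ℝ≥0∞ := if l = ⊤ then 0 else ENNReal.ofReal (Real.exp (-l.toReal))

/-- `-log q`, extended by `⊤` at `0`. -/
noncomputable def nlg (q : ℝ≥0∞) : ℝ≥0∞ := if q = 0 then ⊤ else ENNReal.ofReal (-Real.log q.toReal)

/-- the entropy function on `[0,∞]`. -/
noncomputable def eta (q : ℝ≥0∞) : ℝ≥0∞ := ENNReal.ofReal (Real.negMulLog q.toReal)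

lemma kex_zero : kex 0 = 1 := by simp [kex]

lemma kex_top : kex ⊤ = 0 := by simp [kex]

lemma kex_add (a b : ℝ≥0∞) : kex (a + b) = kex a * kex b := by
  unfold kex
  by_cases ha : a = ⊤
  · simp [ha]
  by_cases hb : b = ⊤
  · simp [hb]
  have : a + b ≠ ⊤ := by simp [ha, hb]
  simp only [ha, hb, this, if_false]
  rw [← ENNReal.ofReal_mul (Real.exp_pos _).le, ← Real.exp_add, ENNReal.toReal_add ha hb]
  congr 2; ring

lemma kex_anti {a b : ℝ≥0∞} (h : a ≤ b) : kex b ≤ kex a := by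
  unfold kex
  by_cases hb : b = ⊤
  · simp [hb]
  have ha : a ≠ ⊤ := ne_top_of_le_ne_top hb h
  simp only [ha, hb, if_false]
  apply ENNReal.ofReal_le_ofReal
  apply Real.exp_le_exp.2
  have := (ENNReal.toReal_le_toReal ha hb).2 h
  linarith

lemma kex_sum {ι : Type*} (s : Finset ι) (f : ι → ℝ≥0∞) :
    kex (∑ i ∈ s, f i) = ∏ i ∈ s, kex (f i) := by
  classical
  induction s using Finset.induction_on with
  | empty => simp [kex_zero]
  | insert a s ha ih => rw [Finset.sum_insert ha, Finset.prod_insert ha, kex_add, ih]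

lemma kex_nlg {q : ℝ≥0∞} (hq : q ≤ 1) : kex (nlg q) = q := by
  unfold nlg
  by_cases h : q = 0
  · simp [h, kex_top]
  have hq' : q ≠ ⊤ := ne_top_of_le_ne_top ENNReal.one_ne_top hq
  have h0 : 0 < q.toReal := ENNReal.toReal_pos h hq'
  have h1 : q.toReal ≤ 1 := by
    simpa using (ENNReal.toReal_le_toReal hq' ENNReal.one_ne_top).2 hq
  have h2 : 0 ≤ -Real.log q.toReal := by
    have := Real.log_nonpos h0.le h1
    linarith
  simp only [h, if_false, kex, ENNReal.ofReal_ne_top, ENNReal.toReal_ofReal h2, neg_neg,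
    Real.exp_log h0, ENNReal.ofReal_toReal hq']

lemma measurable_nlg : Measurable nlg := by
  unfold nlg
  refine Measurable.ite (measurableSet_singleton 0) measurable_const ?_
  fun_prop

lemma measurable_eta : Measurable eta := by
  unfold eta
  have : Measurable Real.negMulLog := Real.continuous_negMulLog.measurable
  fun_prop

lemma mul_nlg (q : ℝ≥0∞) (hq : q ≤ 1) : q * nlg q = eta q := by
  unfold nlg eta
  by_cases h : q = 0
  · simp [h]
  have hq' : q ≠ ⊤ := ne_top_of_le_ne_top ENNReal.one_ne_top hq
  simp only [h, if_false]
  nth_rewrite 1 [← ENNReal.ofReal_toReal hq']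
  rw [← ENNReal.ofReal_mul ENNReal.toReal_nonneg, Real.negMulLog]
  congr 1; ring

/-- Kraft's inequality for finitely supported words. -/
lemma kraft (l : ℕ → ℕ → ℝ≥0∞) (h : ∀ i, ∑' j, kex (l i j) ≤ 1) :
    ∑' w : ℕ →₀ ℕ, kex (∑' i, l i (w i)) ≤ 1 := by
  classical
  rw [ENNReal.tsum_eq_iSup_sum]
  refine iSup_le fun T => ?_
  obtain ⟨N, hN⟩ : ∃ N : ℕ, ∀ w ∈ T, ∀ i, N ≤ i → w i = 0 := by
    refine ⟨(T.biUnion fun w => w.support).sup id + 1, fun w hw i hi => ?_⟩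
    by_contra h0
    have : i ∈ T.biUnion fun w => w.support :=
      Finset.mem_biUnion.2 ⟨w, hw, Finsupp.mem_support_iff.2 h0⟩
    have := Finset.le_sup (f := id) this
    simp only [id] at this
    omega
  let r : (ℕ →₀ ℕ) → (Fin N → ℕ) := fun w i => w i
  have hr : Set.InjOn r T := by
    intro w hw w' hw' hww
    ext i
    by_cases hi : i < N
    · exact congrFun hww ⟨i, hi⟩
    · rw [hN w hw i (by omega), hN w' hw' i (by omega)]
  let M : ℕ := (T.image r).sup (fun p => Finset.univ.sup p) + 1
  calc ∑ w ∈ T, kex (∑' i, l i (w i)) ≤ ∑ w ∈ T, ∏ i : Fin N, kex (l i (r w i)) := by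
        refine Finset.sum_le_sum fun w _ => ?_
        rw [← kex_sum]
        apply kex_anti
        have := ENNReal.sum_le_tsum (f := fun i => l i (w i)) (Finset.range N)
        rwa [Finset.sum_range] at this
    _ = ∑ p ∈ T.image r, ∏ i : Fin N, kex (l i (p i)) := by
        rw [Finset.sum_image hr]
    _ ≤ ∑ p ∈ Fintype.piFinset (fun _ : Fin N => Finset.range M), ∏ i : Fin N, kex (l i (p i)) := by
        apply Finset.sum_le_sum_of_subset
        intro p hp
        rw [Fintype.mem_piFinset]
        intro i
        have h1 : p i ≤ Finset.univ.sup p := Finset.le_sup (Finset.mem_univ i)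
        have h2 := Finset.le_sup (f := fun p : Fin N → ℕ => Finset.univ.sup p) hp
        simp only [Finset.mem_range, M]
        omega
    _ = ∏ i : Fin N, ∑ j ∈ Finset.range M, kex (l i j) := by
        rw [Finset.prod_univ_sum]
    _ ≤ ∏ i : Fin N, (1 : ℝ≥0∞) := by
        apply Finset.prod_le_prod'
        intro i _
        exact (ENNReal.sum_le_tsum _).trans (h i)
    _ = 1 := by simp

/-- one term of Gibbs' inequality. -/
lemma gibbs_term (p l : ℝ≥0∞) (hp : p ≤ 1) : eta p + p ≤ p * l + kex l := by
  by_cases h : p = 0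
  · simp [h, eta]
  have hp' : p ≠ ⊤ := ne_top_of_le_ne_top ENNReal.one_ne_top hp
  by_cases hl : l = ⊤
  · simp [hl, h, ENNReal.mul_top]
  have h0 : 0 < p.toReal := ENNReal.toReal_pos h hp'
  have h1 : p.toReal ≤ 1 := by
    simpa using (ENNReal.toReal_le_toReal hp' ENNReal.one_ne_top).2 hp
  unfold eta kex
  simp only [hl, if_false]
  have e1 : p = ENNReal.ofReal p.toReal := (ENNReal.ofReal_toReal hp').symm
  have e2 : l = ENNReal.ofReal l.toReal := (ENNReal.ofReal_toReal hl).symm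
  set a := p.toReal
  set b := l.toReal with hb
  have hb0 : 0 ≤ b := ENNReal.toReal_nonneg
  rw [e1, e2, ← ENNReal.ofReal_add (Real.negMulLog_nonneg h0.le h1) h0.le,
    ← ENNReal.ofReal_mul h0.le, ← ENNReal.ofReal_add (by positivity) (Real.exp_pos _).le]
  apply ENNReal.ofReal_le_ofReal
  have h3 := Real.log_le_sub_one_of_pos (x := Real.exp (-b) / a) (by positivity)
  rw [Real.log_div (Real.exp_pos _).ne' h0.ne', Real.log_exp] at h3
  have h4 := mul_le_mul_of_nonneg_left h3 h0.le
  have h5 : a * (Real.exp (-b) / a - 1) = Real.exp (-b) - a := by field_simp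
  rw [h5] at h4
  unfold Real.negMulLog
  nlinarith

lemma gibbs {ι : Type*} (p l : ι → ℝ≥0∞) (hp : ∑' i, p i = 1) (hl : ∑' i, kex (l i) ≤ 1) :
    ∑' i, eta (p i) ≤ ∑' i, p i * l i := by
  have h1 : ∑' i, eta (p i) + 1 ≤ ∑' i, p i * l i + 1 := by
    calc ∑' i, eta (p i) + 1 = ∑' i, (eta (p i) + p i) := by rw [ENNReal.tsum_add, hp]
      _ ≤ ∑' i, (p i * l i + kex (l i)) :=
        ENNReal.tsum_le_tsum fun i => gibbs_term _ _ (hp ▸ ENNReal.le_tsum i)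
      _ = ∑' i, p i * l i + ∑' i, kex (l i) := ENNReal.tsum_add
      _ ≤ _ := by gcongr
  exact (ENNReal.add_le_add_iff_right ENNReal.one_ne_top).1 h1

/-- A universal code for the positive integers, with cheap zero symbol. -/
lemma exists_code (ε η : ℝ) (hε : 0 < ε) (hη : 0 < η) :
    ∃ b : ℝ, 0 < b ∧ ∑' n : ℕ, kex (if n = 0 then ENNReal.ofReal ε else
      ENNReal.ofReal b + ENNReal.ofReal (1 + η) * ENNReal.ofReal (Real.log n)) ≤ 1 := by
  have hs : Summable fun n : ℕ => ((n + 1 : ℕ) : ℝ) ^ (-(1 + η)) := by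
    have := (summable_nat_add_iff 1).2 (Real.summable_nat_rpow (p := -(1 + η)) |>.2 (by linarith))
    exact this
  set Z := ∑' n : ℕ, ((n + 1 : ℕ) : ℝ) ^ (-(1 + η)) with hZ
  have hZ0 : 0 ≤ Z := tsum_nonneg fun n => by positivity
  have ht : 0 < 1 - Real.exp (-ε) := by
    have : Real.exp (-ε) < 1 := by rw [Real.exp_lt_one_iff]; linarith
    linarith
  set t := 1 - Real.exp (-ε) with htd
  refine ⟨max 1 (Real.log ((Z + 1) / t)), by positivity, ?_⟩
  set b := max 1 (Real.log ((Z + 1) / t))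
  have hb0 : 0 < b := by positivity
  have hb : Real.exp (-b) * Z ≤ t := by
    have : Real.log ((Z + 1) / t) ≤ b := le_max_right _ _
    have h2 := Real.exp_le_exp.2 this
    rw [Real.exp_log (by positivity), div_le_iff₀ ht] at h2
    rw [Real.exp_neg, inv_mul_le_iff₀ (Real.exp_pos _)]
    linarith
  rw [tsum_eq_zero_add' ENNReal.summable]
  have e1 : ∀ n : ℕ, kex (if n + 1 = 0 then ENNReal.ofReal ε else
      ENNReal.ofReal b + ENNReal.ofReal (1 + η) * ENNReal.ofReal (Real.log ((n + 1 : ℕ) : ℝ)))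
      = ENNReal.ofReal (Real.exp (-b) * ((n + 1 : ℕ) : ℝ) ^ (-(1 + η))) := by
    intro n
    have hl : 0 ≤ Real.log ((n + 1 : ℕ) : ℝ) := Real.log_natCast_nonneg _
    rw [if_neg (Nat.succ_ne_zero n), ← ENNReal.ofReal_mul (by positivity),
      ← ENNReal.ofReal_add (by positivity) (by positivity), kex, if_neg ENNReal.ofReal_ne_top,
      ENNReal.toReal_ofReal (by positivity), Real.rpow_def_of_pos (by positivity), ← Real.exp_add]
    congr 2; ring
  simp only [e1]
  rw [← ENNReal.ofReal_tsum_of_nonneg (fun n => by positivity) (hs.mul_left _), tsum_mul_left, if_pos trivial,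
    kex, if_neg ENNReal.ofReal_ne_top, ENNReal.toReal_ofReal hε.le,
    ← ENNReal.ofReal_add (Real.exp_pos _).le (by positivity)]
  rw [← ENNReal.ofReal_one]
  apply ENNReal.ofReal_le_ofReal
  linarith

/-- The entropy of a probability vector is at least the binary entropy of a smaller set. -/
lemma entropy_lower (f : ℕ → ℝ≥0∞) (hf : ∑' i, f i = 1) (j : ℕ) (p : ℝ≥0∞)
    (h1 : p ≤ f j) (h2 : p ≤ 1 - f j) : eta p + eta (1 - p) ≤ ∑' i, eta (f i) := by
  have hfj : f j ≤ 1 := hf ▸ ENNReal.le_tsum j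
  have hfi : ∀ i, i ≠ j → f i ≤ 1 - f j := by
    intro i hi
    refine ENNReal.le_sub_of_add_le_right (ne_top_of_le_ne_top ENNReal.one_ne_top hfj) ?_
    have := ENNReal.sum_le_tsum (f := f) {i, j}
    rwa [Finset.sum_pair hi, hf] at this
  have htop : ∀ {q : ℝ≥0∞}, q ≤ 1 → q ≠ ⊤ := fun h => ne_top_of_le_ne_top ENNReal.one_ne_top h
  have hp : p ≤ 1 := h1.trans hfj
  have hq : 1 - f j ≤ 1 := tsub_le_self
  have step1 : eta (f j) + eta (1 - f j) ≤ ∑' i, eta (f i) := by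
    rw [ENNReal.tsum_eq_add_tsum_ite j]
    gcongr
    have hs : ∑' i, (if i = j then 0 else f i) = 1 - f j := by
      have := ENNReal.tsum_eq_add_tsum_ite (f := f) j
      rw [hf] at this
      rw [this, ENNReal.add_sub_cancel_left (htop hfj)]
      exact tsum_congr fun i => by split_ifs <;> rfl
    rw [← mul_nlg _ hq]
    calc (1 - f j) * nlg (1 - f j) = ∑' i, (if i = j then 0 else f i) * nlg (1 - f j) := by
          rw [ENNReal.tsum_mul_right, hs]
      _ ≤ _ := by
          refine ENNReal.tsum_le_tsum fun i => ?_
          by_cases hi : i = j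
          · simp [hi]
          simp only [hi, if_false]
          rw [← mul_nlg _ ((hfi i hi).trans hq)]
          gcongr
          have hfi' := hfi i hi
          by_cases h0 : f i = 0
          · simp [h0, nlg]
          have h0' : 1 - f j ≠ 0 := fun h => h0 (le_antisymm (h ▸ hfi') bot_le)
          simp only [nlg, h0, h0', if_false]
          apply ENNReal.ofReal_le_ofReal
          apply neg_le_neg
          apply Real.log_le_log (ENNReal.toReal_pos h0 (htop (hfi'.trans hq)))
          exact (ENNReal.toReal_le_toReal (htop (hfi'.trans hq)) (htop hq)).2 hfi'
  refine le_trans ?_ step1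
  have key : ∀ q : ℝ≥0∞, q ≤ 1 → eta q + eta (1 - q) = ENNReal.ofReal (Real.binEntropy q.toReal) := by
    intro q hq
    have h1 : q.toReal ≤ 1 := by
      simpa using (ENNReal.toReal_le_toReal (htop hq) ENNReal.one_ne_top).2 hq
    have h0 : 0 ≤ q.toReal := ENNReal.toReal_nonneg
    unfold eta
    rw [ENNReal.toReal_sub_of_le hq ENNReal.one_ne_top, ENNReal.toReal_one,
      ← ENNReal.ofReal_add (Real.negMulLog_nonneg h0 h1)
        (Real.negMulLog_nonneg (by linarith) (by linarith)),
      Real.binEntropy_eq_negMulLog_add_negMulLog_one_sub]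
  rw [key p hp, key (f j) hfj]
  apply ENNReal.ofReal_le_ofReal
  have r1 : p.toReal ≤ (f j).toReal := (ENNReal.toReal_le_toReal (htop hp) (htop hfj)).2 h1
  have r2 : p.toReal ≤ 1 - (f j).toReal := by
    have := (ENNReal.toReal_le_toReal (htop hp) (htop hq)).2 h2
    rwa [ENNReal.toReal_sub_of_le hfj ENNReal.one_ne_top, ENNReal.toReal_one] at this
  have r0 : 0 ≤ p.toReal := ENNReal.toReal_nonneg
  have mono := Real.binEntropy_strictMonoOn.monotoneOn
  by_cases hh : (f j).toReal ≤ 2⁻¹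
  · exact mono ⟨r0, r1.trans hh⟩ ⟨ENNReal.toReal_nonneg, hh⟩ r1
  · rw [← Real.binEntropy_one_sub (f j).toReal]
    push Not at hh
    have : (2⁻¹ : ℝ) = 1 - 2⁻¹ := by norm_num
    exact mono ⟨r0, by linarith⟩ ⟨by linarith, by linarith⟩ r2


/-! ### Part 2: conditional probabilities -/

/-- conditional probability of a set, as an extended nonnegative function. -/
noncomputable def cpr {X : Type*} (m : MeasurableSpace X) [mX : MeasurableSpace X]
    (μ : Measure X) (s : Set X) (x : X) : ℝ≥0∞ :=
  ENNReal.ofReal ((μ[s.indicator (fun _ => (1 : ℝ)) | m]) x)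

lemma meas_tsum {X : Type*} {m : MeasurableSpace X} {ι : Type*} [Countable ι]
    {f : ι → X → ℝ≥0∞} (h : ∀ i, Measurable[m] (f i)) : Measurable[m] fun x => ∑' i, f i x :=
  Measurable.tsum h

set_option linter.unusedSectionVars false

section cond

variable {X : Type*} {m' m : MeasurableSpace X} [mX : MeasurableSpace X]
    {μ : Measure X} [IsProbabilityMeasure μ]

lemma measurable_cpr (s : Set X) : Measurable[m] (cpr m μ s) := by
  unfold cpr
  exact ENNReal.measurable_ofReal.comp stronglyMeasurable_condExp.measurable

lemma integrable_ind {s : Set X} (hs : MeasurableSet s) :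
    Integrable (s.indicator (fun _ => (1 : ℝ))) μ :=
  (integrable_const (1 : ℝ)).indicator hs

lemma condExp_ind_nonneg (s : Set X) :
    0 ≤ᵐ[μ] μ[s.indicator (fun _ => (1 : ℝ)) | m] :=
  condExp_nonneg (Filter.Eventually.of_forall fun x => Set.indicator_nonneg (fun _ _ => zero_le_one) x)

lemma setLIntegral_cpr (hm : m ≤ mX) {s D : Set X} (hs : MeasurableSet s)
    (hD : MeasurableSet[m] D) : ∫⁻ x in D, cpr m μ s x ∂μ = μ (s ∩ D) := by
  unfold cpr
  rw [← ofReal_integral_eq_lintegral_ofReal integrable_condExp.integrableOn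
    (ae_restrict_of_ae (condExp_ind_nonneg s)), setIntegral_condExp hm (integrable_ind hs) hD,
    integral_indicator_const _ hs, measureReal_restrict_apply hs]
  simp [measureReal_def]

lemma condEnt_eq {ι : Type*} [Countable ι] (α : ι → Set X) :
    condEnt m μ α = ∫⁻ x, ∑' i, eta (cpr m μ (α i) x) ∂μ := by
  unfold condEnt
  apply lintegral_congr_ae
  have : ∀ᵐ x ∂μ, ∀ i, 0 ≤ (μ[(α i).indicator (fun _ => (1 : ℝ)) | m]) x :=
    ae_all_iff.2 fun i => condExp_ind_nonneg (α i)
  filter_upwards [this] with x hx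
  refine tsum_congr fun i => ?_
  rw [eta, cpr, ENNReal.toReal_ofReal (hx i)]

/-- uniqueness/comparison -/
lemma ae_le_of_setLIntegral (hm : m ≤ mX) {f g : X → ℝ≥0∞} (hf : Measurable[m] f)
    (hg : Measurable[m] g)
    (h : ∀ D, MeasurableSet[m] D → ∫⁻ x in D, f x ∂μ ≤ ∫⁻ x in D, g x ∂μ) : f ≤ᵐ[μ] g := by
  refine ae_le_of_ae_le_trim (hm := hm) ?_
  refine ae_le_of_forall_setLIntegral_le_of_sigmaFinite hf ?_
  intro D hD _
  rw [restrict_trim hm _ hD, lintegral_trim hm hf, lintegral_trim hm hg]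
  exact h D hD

lemma ae_eq_of_setLIntegral (hm : m ≤ mX) {f g : X → ℝ≥0∞} (hf : Measurable[m] f)
    (hg : Measurable[m] g)
    (h : ∀ D, MeasurableSet[m] D → ∫⁻ x in D, f x ∂μ = ∫⁻ x in D, g x ∂μ) : f =ᵐ[μ] g := by
  filter_upwards [ae_le_of_setLIntegral hm hf hg fun D hD => (h D hD).le,
    ae_le_of_setLIntegral hm hg hf fun D hD => (h D hD).ge] with x h1 h2
  exact le_antisymm h1 h2

/-- pull-out property -/
lemma lintegral_cpr_mul (hm : m ≤ mX) {s : Set X} (hs : MeasurableSet s)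
    {u : X → ℝ≥0∞} (hu : Measurable[m] u) :
    ∫⁻ x, cpr m μ s x * u x ∂μ = ∫⁻ x in s, u x ∂μ := by
  have hc : Measurable (cpr m μ s) := (measurable_cpr s).mono hm le_rfl
  have e : (μ.withDensity (cpr m μ s)).trim hm = (μ.restrict s).trim hm := by
    refine @Measure.ext _ m _ _ fun D hD => ?_
    rw [trim_measurableSet_eq hm hD, trim_measurableSet_eq hm hD, withDensity_apply _ (hm _ hD),
      setLIntegral_cpr hm hs hD, Measure.restrict_apply (hm _ hD), Set.inter_comm]
  have h1 := lintegral_trim (μ := μ.withDensity (cpr m μ s)) hm hu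
  rw [e, lintegral_trim hm hu, lintegral_withDensity_eq_lintegral_mul _ hc (hu.mono hm le_rfl)] at h1
  exact h1.symm

lemma tsum_cpr (hm : m ≤ mX) {ι : Type*} [Countable ι] {α : ι → Set X}
    (hα : ∀ i, MeasurableSet (α i)) (hd : Pairwise (Function.onFun Disjoint α))
    (hU : (⋃ i, α i) = univ) : ∀ᵐ x ∂μ, ∑' i, cpr m μ (α i) x = 1 := by
  have := ae_eq_of_setLIntegral (μ := μ) hm (f := fun x => ∑' i, cpr m μ (α i) x)
    (g := fun _ => 1) (meas_tsum fun i => measurable_cpr (α i))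
    (@measurable_const _ _ _ m _) (fun D hD => by
      rw [lintegral_tsum fun i => ((measurable_cpr (α i)).mono hm le_rfl).aemeasurable]
      simp only [setLIntegral_cpr hm (hα _) hD]
      rw [← measure_iUnion (fun i j hij => (hd hij).mono inter_subset_left inter_subset_left)
        (fun i => (hα i).inter (hm _ hD)), ← iUnion_inter, hU]
      simp)
  exact this

lemma cpr_le_one (hm : m ≤ mX) {s : Set X} (hs : MeasurableSet s) :
    ∀ᵐ x ∂μ, cpr m μ s x ≤ 1 := by
  refine ae_le_of_setLIntegral hm (measurable_cpr s) (@measurable_const _ _ _ m _) fun D hD => ?_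
  rw [setLIntegral_cpr hm hs hD]
  simpa using measure_mono inter_subset_right

/-- Restriction of a conditional probability to a set of the algebra. -/
lemma cpr_inter (hm : m ≤ mX) {s D : Set X} (hs : MeasurableSet s) (hD : MeasurableSet[m] D) :
    ∀ᵐ x ∂μ, cpr m μ (s ∩ D) x = D.indicator (cpr m μ s) x := by
  refine ae_eq_of_setLIntegral hm (measurable_cpr _)
    (Measurable.indicator (measurable_cpr s) hD) fun E hE => ?_
  rw [setLIntegral_cpr hm (hs.inter (hm _ hD)) hE, setLIntegral_indicator (hm _ hD),
    setLIntegral_cpr hm hs (hD.inter hE), inter_assoc]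

lemma cpr_congr_on (hm : m ≤ mX) {s t D : Set X} (hs : MeasurableSet s) (ht : MeasurableSet t)
    (hD : MeasurableSet[m] D) (h : s ∩ D = t ∩ D) :
    ∀ᵐ x ∂μ, x ∈ D → cpr m μ s x = cpr m μ t x := by
  filter_upwards [cpr_inter (μ := μ) hm hs hD, cpr_inter (μ := μ) hm ht hD] with x h1 h2 hx
  rw [h, h2] at h1
  simpa [hx] using h1.symm

/-- Two algebras agreeing on a set `P` mod null sets give the same conditional probabilities
there. -/
lemma cpr_eq_of_agree (hmm : m' ≤ m) (hm : m ≤ mX) {s P : Set X}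
    (hs : MeasurableSet s)
    (hP : MeasurableSet[m'] P)
    (h : ∀ D, MeasurableSet[m] D → ∃ D', MeasurableSet[m'] D' ∧ D =ᵐ[μ.restrict P] D') :
    ∀ᵐ x ∂μ, x ∈ P → cpr m μ s x = cpr m' μ s x := by
  have hm' := hmm.trans hm
  have : cpr m μ (s ∩ P) =ᵐ[μ] P.indicator (cpr m' μ s) := by
    refine ae_eq_of_setLIntegral hm (measurable_cpr _)
      (Measurable.indicator ((measurable_cpr s).mono hmm le_rfl) (hmm _ hP)) fun D hD => ?_
    obtain ⟨D', hD', hDD⟩ := h D hD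
    rw [setLIntegral_indicator (hm' _ hP), setLIntegral_cpr hm (hs.inter (hm' _ hP)) hD]
    have e : (P ∩ D : Set X) =ᵐ[μ] (P ∩ D' : Set X) := by
      have := (ae_restrict_iff' (hm' _ hP)).1 hDD
      filter_upwards [this] with x hx
      by_cases hxP : x ∈ P
      · have h2 : (x ∈ D) = (x ∈ D') := hx hxP
        apply propext
        change x ∈ P ∧ x ∈ D ↔ x ∈ P ∧ x ∈ D'
        rw [h2]
      · apply propext
        change x ∈ P ∧ x ∈ D ↔ x ∈ P ∧ x ∈ D'
        simp [hxP]
    rw [setLIntegral_congr e, setLIntegral_cpr hm' hs (hP.inter hD'), inter_assoc]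
    exact measure_congr (Filter.EventuallyEq.inter (Filter.EventuallyEq.refl _ _) e)
  filter_upwards [this, cpr_inter (μ := μ) hm hs (hmm _ hP)] with x h1 h2 hx
  rw [h1] at h2
  simpa [hx] using h2.symm

/-- If the conditional probability is `0` or `1` on `D`, the set is in the algebra there. -/
lemma ae_mem_iff_cpr_eq_one (hm : m ≤ mX) {s : Set X} (hs : MeasurableSet s) :
    ∀ᵐ x ∂μ, (cpr m μ s x = 0 ∨ cpr m μ s x = 1) → (x ∈ s ↔ cpr m μ s x = 1) := by
  have m0 : MeasurableSet[m] {x | cpr m μ s x = 0} := measurable_cpr s (measurableSet_singleton 0)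
  have m1 : MeasurableSet[m] {x | cpr m μ s x = 1} := measurable_cpr s (measurableSet_singleton 1)
  have e0 : μ (s ∩ {x | cpr m μ s x = 0}) = 0 := by
    rw [← setLIntegral_cpr hm hs m0, setLIntegral_congr_fun (hm _ m0) (g := fun _ => 0)
      (fun x hx => hx)]
    simp
  have e1 : μ ({x | cpr m μ s x = 1} \ s) = 0 := by
    have h1 : μ (s ∩ {x | cpr m μ s x = 1}) = μ {x | cpr m μ s x = 1} := by
      rw [← setLIntegral_cpr hm hs m1, setLIntegral_congr_fun (hm _ m1) (g := fun _ => 1)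
        (fun x hx => hx)]
      simp
    have h2 := measure_inter_add_sdiff (μ := μ) {x | cpr m μ s x = 1} hs
    rw [inter_comm, h1] at h2
    have h3 : μ {x | cpr m μ s x = 1} + μ ({x | cpr m μ s x = 1} \ s)
      = μ {x | cpr m μ s x = 1} + 0 := by rw [h2, add_zero]
    exact (ENNReal.add_right_inj (measure_ne_top _ _)).1 h3
  have a0 := measure_eq_zero_iff_ae_notMem.1 e0
  have a1 := measure_eq_zero_iff_ae_notMem.1 e1
  filter_upwards [a0, a1] with x h0 h1 h
  constructor
  · intro hx
    rcases h with h | h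
    · exact absurd ⟨hx, h⟩ h0
    · exact h
  · intro hx
    by_contra hxs
    exact h1 ⟨hx, hxs⟩

/-- Gibbs' inequality, integrated over a set of the algebra. -/
lemma setLIntegral_entropy_le (hm : m ≤ mX) {ι : Type*} [Countable ι] {α : ι → Set X}
    (hα : ∀ i, MeasurableSet (α i)) (hd : Pairwise (Function.onFun Disjoint α))
    (hU : (⋃ i, α i) = univ) (l : ι → ℝ≥0∞) (hl : ∑' i, kex (l i) ≤ 1) {D : Set X}
    (hD : MeasurableSet[m] D) :
    ∫⁻ x in D, ∑' i, eta (cpr m μ (α i) x) ∂μ ≤ ∑' i, l i * μ (α i ∩ D) := by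
  calc _ ≤ ∫⁻ x in D, ∑' i, cpr m μ (α i) x * l i ∂μ := by
        apply lintegral_mono_ae
        apply ae_restrict_of_ae
        filter_upwards [tsum_cpr (μ := μ) hm hα hd hU] with x hx
        exact gibbs _ _ hx hl
    _ = _ := by
        rw [lintegral_tsum fun i => (((measurable_cpr (α i)).mono hm le_rfl).mul_const _).aemeasurable]
        refine tsum_congr fun i => ?_
        rw [lintegral_mul_const _ ((measurable_cpr (α i)).mono hm le_rfl),
          setLIntegral_cpr hm (hα i) hD, mul_comm]

/-- Integral of the information function over a set of the algebra. -/
lemma setLIntegral_info (hm : m ≤ mX) {s D : Set X} (hs : MeasurableSet s)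
    (hD : MeasurableSet[m] D) :
    ∫⁻ x in s ∩ D, nlg (cpr m μ s x) ∂μ = ∫⁻ x in D, eta (cpr m μ s x) ∂μ := by
  have h := lintegral_cpr_mul (μ := μ) hm hs (u := D.indicator fun x => nlg (cpr m μ s x))
    (Measurable.indicator (measurable_nlg.comp (measurable_cpr s)) hD)
  rw [setLIntegral_indicator (hm _ hD), inter_comm] at h
  rw [← h, ← lintegral_indicator (hm _ hD)]
  apply lintegral_congr_ae
  filter_upwards [cpr_le_one (μ := μ) hm hs] with x hx
  by_cases hxD : x ∈ D
  · simp [hxD, mul_nlg _ hx]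
  · simp [hxD]

end cond

set_option linter.unusedSectionVars false

/-! ### Part 3: group actions -/

section grp

variable {G X : Type*} {m M : MeasurableSpace X} [Group G] [MulAction G X]

lemma InvariantAlg.sup {m1 m2 : MeasurableSpace X} (h1 : InvariantAlg G m1)
    (h2 : InvariantAlg G m2) : InvariantAlg G (m1 ⊔ m2) := by
  intro g
  have : m1 ⊔ m2 ≤ MeasurableSpace.map (fun x => g • x) (m1 ⊔ m2) :=
    sup_le (fun A hA => (le_sup_left : m1 ≤ m1 ⊔ m2) _ (h1 g A hA))
      (fun A hA => (le_sup_right : m2 ≤ m1 ⊔ m2) _ (h2 g A hA))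
  exact fun A hA => this A hA

lemma InvariantAlg.generateFrom {C : Set (Set X)}
    (h : ∀ (g : G), ∀ A ∈ C, MeasurableSet[MeasurableSpace.generateFrom C] ((fun x => g • x) ⁻¹' A)) :
    InvariantAlg G (MeasurableSpace.generateFrom C) := by
  intro g
  have : MeasurableSpace.generateFrom C ≤
      MeasurableSpace.map (fun x => g • x) (MeasurableSpace.generateFrom C) :=
    MeasurableSpace.generateFrom_le fun A hA => h g A hA
  exact fun A hA => this A hA

lemma invariant_sigmaG (ξ : Set (Set X)) : InvariantAlg G (sigmaG G ξ) := by
  refine InvariantAlg.generateFrom ?_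
  rintro g A ⟨h, B, hB, rfl⟩
  refine MeasurableSpace.measurableSet_generateFrom ⟨h * g, B, hB, ?_⟩
  ext x
  simp [mul_smul]

lemma sigmaG_le (hM : InvariantAlg G M) {ξ : Set (Set X)} (h : ∀ A ∈ ξ, MeasurableSet[M] A) :
    sigmaG G ξ ≤ M := by
  refine MeasurableSpace.generateFrom_le ?_
  rintro _ ⟨g, B, hB, rfl⟩
  exact hM g B (h B hB)

lemma mem_sigmaG {ξ : Set (Set X)} {A : Set X} (h : A ∈ ξ) : MeasurableSet[sigmaG G ξ] A :=
  MeasurableSpace.measurableSet_generateFrom ⟨1, A, h, by ext; simp⟩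

/-- saturation -/
def satur (G : Type*) {X : Type*} [Group G] [MulAction G X] (N : Set X) : Set X :=
  {x | ∃ g : G, g • x ∈ N}

lemma satur_inv (N : Set X) (g : G) : (fun x => g • x) ⁻¹' (satur G N) = satur G N := by
  ext x
  constructor
  · rintro ⟨h, hh⟩
    exact ⟨h * g, by simpa [mul_smul] using hh⟩
  · rintro ⟨h, hh⟩
    exact ⟨h * g⁻¹, by simpa [mul_smul] using hh⟩

lemma smul_mem_satur {N : Set X} (g : G) {x : X} : g • x ∈ satur G N ↔ x ∈ satur G N := by
  have := satur_inv (G := G) N g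
  exact Set.ext_iff.1 this x

lemma subset_satur (N : Set X) : N ⊆ satur G N := fun x hx => ⟨1, by simpa using hx⟩

/-- `Y` meets each orbit at most once. -/
def OnePer (G : Type*) {X : Type*} [Group G] [MulAction G X] (Y : Set X) : Prop :=
  ∀ x ∈ Y, ∀ g : G, g • x ∈ Y → g • x = x

/-- the first time of hitting `T` along an enumeration -/
def firstHit (g : ℕ → G) (T : Set X) (i : ℕ) : Set X :=
  {x | g i • x ∈ T ∧ ∀ k < i, g k • x ∉ T}

lemma measurableSet_firstHit (hM : InvariantAlg G M) (g : ℕ → G) {T : Set X}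
    (hT : MeasurableSet[M] T) (i : ℕ) : MeasurableSet[M] (firstHit g T i) := by
  have : firstHit g T i = (fun x => g i • x) ⁻¹' T ∩ ⋂ k, ⋂ (_ : k < i), ((fun x => g k • x) ⁻¹' T)ᶜ := by
    ext x; simp [firstHit]
  rw [this]
  exact MeasurableSet.inter (hM _ _ hT)
    (MeasurableSet.iInter fun k => MeasurableSet.iInter fun _ => (hM _ _ hT).compl)

variable [Countable G] [mX : MeasurableSpace X] {μ : Measure X}

lemma measurableSet_invSigma {A : Set X} (hA : MeasurableSet A)
    (h : ∀ g : G, (fun x => g • x) ⁻¹' A = A) : MeasurableSet[invSigma G X] A :=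
  MeasurableSpace.measurableSet_generateFrom ⟨hA, h⟩

lemma invSigma_le : invSigma G X ≤ mX :=
  MeasurableSpace.generateFrom_le fun _ hA => hA.1

lemma invariant_invSigma : InvariantAlg G (invSigma G X) := by
  refine InvariantAlg.generateFrom ?_
  rintro g A ⟨hA, hA'⟩
  rw [hA' g]
  exact MeasurableSpace.measurableSet_generateFrom ⟨hA, hA'⟩

lemma measurableSet_satur (hpmp : IsPmp G μ) {N : Set X} (hN : MeasurableSet N) :
    MeasurableSet (satur G N) := by
  have : satur G N = ⋃ g : G, (fun x => g • x) ⁻¹' N := by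
    ext x; simp [satur]
  rw [this]
  exact MeasurableSet.iUnion fun g => (hpmp g).measurable hN

lemma satur_mem_invSigma (hpmp : IsPmp G μ) {N : Set X} (hN : MeasurableSet N) :
    MeasurableSet[invSigma G X] (satur G N) :=
  measurableSet_invSigma (measurableSet_satur hpmp hN) (satur_inv N)

lemma invariant_top (hpmp : IsPmp G μ) : InvariantAlg G mX :=
  fun g _ hA => (hpmp g).measurable hA

lemma firstHit_unique {g : ℕ → G} {T : Set X} {i k : ℕ} {x : X} (hi : x ∈ firstHit g T i)
    (hk : x ∈ firstHit g T k) : i = k := by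
  rcases lt_trichotomy i k with h | h | h
  · exact absurd hi.1 (hk.2 i h)
  · exact h
  · exact absurd hk.1 (hi.2 k h)

lemma exists_firstHit {g : ℕ → G} (hg : Surjective g) {T : Set X} {x : X} (hx : x ∈ satur G T) :
    ∃ i, x ∈ firstHit g T i := by
  classical
  obtain ⟨h, hh⟩ := hx
  obtain ⟨n, rfl⟩ := hg h
  have : ∃ n, g n • x ∈ T := ⟨n, hh⟩
  exact ⟨Nat.find this, Nat.find_spec this, fun k hk => Nat.find_min this hk⟩

/-- If almost all points of a partial transversal `Y ∩ D` can be moved into `T`, then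
`μ (Y ∩ D) ≤ μ T`. -/
lemma transport (hpmp : IsPmp G μ) {Y T : Set X} (hY : MeasurableSet Y) (hYo : OnePer G Y)
    (hT : MeasurableSet T) (h : ∀ᵐ x ∂μ, x ∈ Y → x ∈ satur G T) : μ Y ≤ μ T := by
  obtain ⟨g, hg⟩ := exists_surjective_nat G
  let C : ℕ → Set X := fun i => Y ∩ firstHit g T i
  have hC : ∀ i, MeasurableSet (C i) := fun i =>
    hY.inter (measurableSet_firstHit (invariant_top hpmp) g hT i)
  calc μ Y ≤ μ (⋃ i, C i) := by
        apply measure_mono_ae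
        filter_upwards [h] with x hx hxY
        obtain ⟨i, hi⟩ := exists_firstHit hg (hx hxY)
        exact mem_iUnion.2 ⟨i, hxY, hi⟩
    _ ≤ ∑' i, μ (C i) := measure_iUnion_le _
    _ = ∑' i, μ ((fun x => (g i)⁻¹ • x) ⁻¹' C i) := by
        refine tsum_congr fun i => ?_
        rw [(hpmp (g i)⁻¹).measure_preimage (hC i).nullMeasurableSet]
    _ = μ (⋃ i, (fun x => (g i)⁻¹ • x) ⁻¹' C i) := by
        rw [measure_iUnion _ fun i => (hpmp (g i)⁻¹).measurable (hC i)]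
        intro i k hik
        refine Set.disjoint_left.2 fun x hx hx' => hik ?_
        have h1 : (g i)⁻¹ • x ∈ C i := hx
        have h2 : (g k)⁻¹ • x ∈ C k := hx'
        have h3 := hYo _ h1.1 ((g k)⁻¹ * g i) (by simpa [mul_smul] using h2.1)
        have h4 : (g k)⁻¹ • x = (g i)⁻¹ • x := by simpa [mul_smul] using h3
        rw [h4] at h2
        exact firstHit_unique h1.2 h2.2
    _ ≤ μ T := by
        apply measure_mono
        refine iUnion_subset fun i x hx => ?_
        have h1 : (g i)⁻¹ • x ∈ C i := hx
        simpa using h1.2.1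

/-- Choose one point in each orbit inside `N`. -/
lemma exists_onePer_subset (hpmp : IsPmp G μ) {Y0 N : Set X} (hY0 : MeasurableSet Y0)
    (hYo : OnePer G Y0) (hN : MeasurableSet N) :
    ∃ Y, MeasurableSet Y ∧ Y ⊆ N ∧ OnePer G Y ∧ satur G Y = satur G N ∩ satur G Y0 := by
  obtain ⟨g, hg⟩ := exists_surjective_nat G
  let C : ℕ → Set X := fun i => Y0 ∩ firstHit g N i
  have hC : ∀ i, MeasurableSet (C i) := fun i =>
    hY0.inter (measurableSet_firstHit (invariant_top hpmp) g hN i)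
  have mem : ∀ {x i}, (g i)⁻¹ • x ∈ C i → x ∈ N := fun {x i} h => by simpa using h.2.1
  refine ⟨⋃ i, (fun x => (g i)⁻¹ • x) ⁻¹' C i,
    MeasurableSet.iUnion fun i => (hpmp (g i)⁻¹).measurable (hC i), ?_, ?_, ?_⟩
  · exact iUnion_subset fun i x hx => mem hx
  · intro x hx h hhx
    obtain ⟨i, hi⟩ := mem_iUnion.1 hx
    obtain ⟨k, hk⟩ := mem_iUnion.1 hhx
    have h1 : (g i)⁻¹ • x ∈ C i := hi
    have h2 : (g k)⁻¹ • h • x ∈ C k := hk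
    have h3 := hYo _ h1.1 ((g k)⁻¹ * h * g i) (by simpa [mul_smul] using h2.1)
    have h4 : (g k)⁻¹ • h • x = (g i)⁻¹ • x := by simpa [mul_smul] using h3
    rw [h4] at h2
    have := firstHit_unique h1.2 h2.2
    subst this
    exact (smul_left_cancel _ h4)
  · ext x
    constructor
    · rintro ⟨h, hh⟩
      obtain ⟨i, hi⟩ := mem_iUnion.1 hh
      have h1 : (g i)⁻¹ • h • x ∈ C i := hi
      exact ⟨⟨h, mem h1⟩, ⟨(g i)⁻¹ * h, by simpa [mul_smul] using h1.1⟩⟩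
    · rintro ⟨hxN, ⟨h, hh⟩⟩
      have : h • x ∈ satur G N := (smul_mem_satur h).2 hxN
      obtain ⟨i, hi⟩ := exists_firstHit hg this
      refine ⟨g i * h, mem_iUnion.2 ⟨i, ?_⟩⟩
      change (g i)⁻¹ • (g i * h) • x ∈ C i
      rw [mul_smul, inv_smul_smul]; exact ⟨hh, hi⟩

/-- The smooth part and small complete sections of the rest. -/
lemma exists_sections [StandardBorelSpace X] [IsProbabilityMeasure μ] (hpmp : IsPmp G μ) :
    ∃ Y0 : Set X, MeasurableSet Y0 ∧ OnePer G Y0 ∧ ∀ δ : ℝ≥0∞, 0 < δ →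
      ∃ B : Set X, MeasurableSet B ∧ satur G B = (satur G Y0)ᶜ ∧ μ B ≤ δ := by
  let φ : X → ℝ := fun x => Real.arctan (embeddingReal X x)
  have hφm : Measurable φ :=
    Real.measurable_arctan.comp (measurableEmbedding_embeddingReal X).measurable
  have hφi : Injective φ :=
    Real.arctan_injective.comp (measurableEmbedding_embeddingReal X).injective
  have hφg : ∀ g : G, Measurable fun x => φ (g • x) := fun g => hφm.comp (hpmp g).measurable
  let Y0 : Set X := {x | ∀ g : G, φ x ≤ φ (g • x)}
  have hY0 : MeasurableSet Y0 := by
    have : Y0 = ⋂ g : G, {x | φ x ≤ φ (g • x)} := by ext; simp [Y0]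
    rw [this]
    exact MeasurableSet.iInter fun g => measurableSet_le hφm (hφg g)
  refine ⟨Y0, hY0, ?_, ?_⟩
  · intro x hx g hgx
    apply hφi
    apply le_antisymm _ (hx g)
    have := hgx g⁻¹
    simpa using this
  intro δ hδ
  let B : ℕ → Set X := fun n => {x | ∀ g : G, φ x ≤ φ (g • x) + 1 / ((n : ℝ) + 1)} ∩ (satur G Y0)ᶜ
  have hB : ∀ n, MeasurableSet (B n) := by
    intro n
    refine MeasurableSet.inter ?_ (measurableSet_satur hpmp hY0).compl
    have : {x | ∀ g : G, φ x ≤ φ (g • x) + 1 / ((n : ℝ) + 1)}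
        = ⋂ g : G, {x | φ x ≤ φ (g • x) + 1 / ((n : ℝ) + 1)} := by ext; simp
    rw [this]
    exact MeasurableSet.iInter fun g => measurableSet_le hφm ((hφg g).add_const _)
  have hanti : Antitone B := by
    intro n k hnk x hx
    refine ⟨fun g => (hx.1 g).trans ?_, hx.2⟩
    have : 1 / ((k : ℝ) + 1) ≤ 1 / ((n : ℝ) + 1) := by
      apply one_div_le_one_div_of_le (by positivity)
      have : (n : ℝ) ≤ k := by exact_mod_cast hnk
      linarith
    linarith
  have hempty : ⋂ n, B n = ∅ := by
    refine Set.eq_empty_of_forall_notMem fun x hx => ?_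
    have hx' := fun n => mem_iInter.1 hx n
    refine (hx' 0).2 (subset_satur Y0 ?_)
    intro g
    refine le_of_forall_pos_le_add fun ε hε => ?_
    obtain ⟨n, hn⟩ := exists_nat_one_div_lt hε
    have := (hx' n).1 g
    linarith
  have htend := tendsto_measure_iInter_atTop (μ := μ) (s := B) (fun n => (hB n).nullMeasurableSet)
    hanti ⟨0, measure_ne_top _ _⟩
  rw [hempty, measure_empty] at htend
  obtain ⟨n, hn⟩ := (htend.eventually (Iic_mem_nhds hδ)).exists
  refine ⟨B n, hB n, ?_, hn⟩
  ext x
  constructor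
  · rintro ⟨g, hg⟩ hx
    exact hg.2 ((smul_mem_satur g).2 hx)
  · intro hx
    have hbd : BddBelow (range fun g : G => φ (g • x)) :=
      ⟨-(Real.pi / 2), by rintro _ ⟨g, rfl⟩; exact (Real.neg_pi_div_two_lt_arctan _).le⟩
    have hlt : (⨅ g : G, φ (g • x)) < (⨅ g : G, φ (g • x)) + 1 / ((n : ℝ) + 1) := by
      have : 0 < 1 / ((n : ℝ) + 1) := by positivity
      linarith
    obtain ⟨g, hg⟩ := exists_lt_of_ciInf_lt hlt
    refine ⟨g, ⟨fun h => ?_, fun hh => hx ((smul_mem_satur g).1 hh)⟩⟩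
    have := ciInf_le hbd (h * g)
    simp only [mul_smul] at this
    linarith

end grp

/-- completion of a σ-algebra by null sets. -/
abbrev evm {X : Type*} (m : MeasurableSpace X) [mX : MeasurableSpace X] (ν : Measure X) :
    MeasurableSpace X := eventuallyMeasurableSpace m (ae ν)

section evmsec

variable {G X : Type*} {m m' : MeasurableSpace X} [Group G] [MulAction G X]
  [mX : MeasurableSpace X] {ν : Measure X}

lemma le_evm : m ≤ evm m ν := fun s hs => ⟨s, hs, Filter.EventuallyEq.refl _ _⟩

lemma evm_congr {s t : Set X} (hs : MeasurableSet[evm m ν] s) (h : ∀ᵐ x ∂ν, x ∈ t ↔ x ∈ s) :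
    MeasurableSet[evm m ν] t := by
  obtain ⟨u, hu, hsu⟩ := hs
  refine ⟨u, hu, Filter.EventuallyEq.trans ?_ hsu⟩
  filter_upwards [h] with x hx
  exact propext hx

lemma invariant_evm (hpmp : IsPmp G ν) (hm : InvariantAlg G m) : InvariantAlg G (evm m ν) := by
  rintro g A ⟨t, ht, hAt⟩
  exact ⟨_, hm g t ht, (hpmp g).quasiMeasurePreserving.preimage_ae_eq hAt⟩

lemma evm_le_of_le (h : m' ≤ evm m ν) {s : Set X} (hs : MeasurableSet[evm m' ν] s) :
    MeasurableSet[evm m ν] s := by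
  obtain ⟨t, ht, hst⟩ := hs
  refine evm_congr (h t ht) ?_
  filter_upwards [hst] with x hx
  exact Eq.to_iff hx

end evmsec


set_option linter.unusedSectionVars false

/-! ### Part 4: coding -/

section rank

variable {V : Type*}

open Classical in
/-- rank of `v` for the cost `L`, ties being broken by `enc`. -/
noncomputable def rk (L : V → ℝ≥0∞) (enc : V → ℕ) (v : V) : ℝ≥0∞ :=
  ∑' v', if L v' < L v ∨ (L v' = L v ∧ enc v' < enc v) then 1 else 0

lemma rk_succ_mul (L : V → ℝ≥0∞) (enc : V → ℕ) (v : V) :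
    (rk L enc v + 1) * kex (L v) ≤ ∑' v', kex (L v') := by
  classical
  have h1 : (1 : ℝ≥0∞) = ∑' v', if v' = v then (1 : ℝ≥0∞) else 0 := by simp
  rw [h1, rk, ← ENNReal.tsum_add, ← ENNReal.tsum_mul_right]
  refine ENNReal.tsum_le_tsum fun v' => ?_
  by_cases hv : v' = v
  · subst hv; simp
  · simp only [hv, if_false, add_zero]
    split_ifs with h
    · rw [one_mul]
      rcases h with h | h
      · exact kex_anti h.le
      · rw [h.1]
    · simp

lemma rk_lt (L : V → ℝ≥0∞) (enc : V → ℕ) {v w : V}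
    (h : L v < L w ∨ (L v = L w ∧ enc v < enc w)) : rk L enc v + 1 ≤ rk L enc w := by
  classical
  have h1 : (1 : ℝ≥0∞) = ∑' v', if v' = v then (1 : ℝ≥0∞) else 0 := by simp
  rw [h1, rk, rk, ← ENNReal.tsum_add]
  refine ENNReal.tsum_le_tsum fun v' => ?_
  by_cases hv : v' = v
  · subst hv; simp [h]
  · simp only [hv, if_false, add_zero]
    split_ifs with h2 h3 h3
    · exact le_rfl
    · exfalso
      apply h3
      rcases h with h | h <;> rcases h2 with h2 | h2
      · exact Or.inl (h2.trans h)
      · exact Or.inl (h2.1.trans_lt h)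
      · exact Or.inl (h2.trans_eq h.1)
      · exact Or.inr ⟨h2.1.trans h.1, h2.2.trans h.2⟩
    · exact zero_le_one
    · exact le_rfl

lemma rk_inj_aux (L : V → ℝ≥0∞) (enc : V → ℕ) {v w : V}
    (h : L v < L w ∨ (L v = L w ∧ enc v < enc w)) (hw : rk L enc w ≠ ⊤)
    (he : ⌊(rk L enc v).toReal⌋₊ = ⌊(rk L enc w).toReal⌋₊) : False := by
  have h1 := rk_lt L enc h
  have hv : rk L enc v ≠ ⊤ := by
    intro hv; rw [hv] at h1; exact hw (top_le_iff.1 (by simpa using h1))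
  have h2 := ENNReal.toReal_mono hw h1
  rw [ENNReal.toReal_add hv ENNReal.one_ne_top] at h2
  have h3 := Nat.floor_mono h2
  simp only [ENNReal.toReal_one] at h3
  rw [Nat.floor_add_one ENNReal.toReal_nonneg] at h3
  omega

lemma rk_inj (L : V → ℝ≥0∞) {enc : V → ℕ} (henc : Injective enc) {v w : V}
    (hv : rk L enc v ≠ ⊤) (hw : rk L enc w ≠ ⊤)
    (he : ⌊(rk L enc v).toReal⌋₊ = ⌊(rk L enc w).toReal⌋₊) : v = w := by
  by_contra hne
  have hen : enc v ≠ enc w := fun h => hne (henc h)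
  rcases lt_trichotomy (L v) (L w) with h | h | h
  · exact rk_inj_aux L enc (Or.inl h) hw he
  · rcases lt_or_gt_of_ne hen with h' | h'
    · exact rk_inj_aux L enc (Or.inr ⟨h, h'⟩) hw he
    · exact rk_inj_aux L enc (Or.inr ⟨h.symm, h'⟩) hv he.symm
  · exact rk_inj_aux L enc (Or.inl h) hv he.symm

lemma rk_log (L : V → ℝ≥0∞) (enc : V → ℕ) (hk : ∑' v', kex (L v') ≤ 1) {v : V}
    (hv : L v ≠ ⊤) : rk L enc v ≠ ⊤ ∧
      ENNReal.ofReal (Real.log ((⌊(rk L enc v).toReal⌋₊ + 1 : ℕ) : ℝ)) ≤ L v := by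
  have h := (rk_succ_mul L enc v).trans hk
  have hkex : kex (L v) = ENNReal.ofReal (Real.exp (-(L v).toReal)) := by
    simp [kex, hv]
  have hpos : 0 < Real.exp (-(L v).toReal) := Real.exp_pos _
  have hr : rk L enc v ≠ ⊤ := by
    intro hr
    rw [hr, hkex] at h
    rw [top_add, ENNReal.top_mul (by simpa using hpos)] at h
    simp at h
  refine ⟨hr, ?_⟩
  rw [hkex] at h
  have h2 := ENNReal.toReal_mono ENNReal.one_ne_top h
  rw [ENNReal.toReal_mul, ENNReal.toReal_add hr ENNReal.one_ne_top,
    ENNReal.toReal_ofReal hpos.le] at h2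
  simp only [ENNReal.toReal_one] at h2
  have h3 : (rk L enc v).toReal + 1 ≤ Real.exp (L v).toReal := by
    rw [Real.exp_neg] at h2
    have hp := Real.exp_pos (L v).toReal
    rwa [← div_eq_mul_inv, div_le_one hp] at h2
  rw [← ENNReal.ofReal_toReal hv]
  apply ENNReal.ofReal_le_ofReal
  rw [Real.log_le_iff_le_exp (by positivity)]
  push_cast
  have := Nat.floor_le (ENNReal.toReal_nonneg (a := rk L enc v))
  linarith

lemma measurableSet_rk_rel {X : Type*} {M : MeasurableSpace X} {L : V → X → ℝ≥0∞}
    (hL : ∀ v, Measurable (L v)) (enc : V → ℕ) (v' v : V) :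
    MeasurableSet {x | L v' x < L v x ∨ (L v' x = L v x ∧ enc v' < enc v)} :=
  (measurableSet_lt (hL v') (hL v)).union
    ((measurableSet_eq_fun (hL v') (hL v)).inter (MeasurableSet.const _))

lemma measurable_rk [Countable V] {X : Type*} {M : MeasurableSpace X} {L : V → X → ℝ≥0∞}
    (hL : ∀ v, Measurable (L v)) (enc : V → ℕ) (v : V) :
    Measurable fun x => rk (fun v => L v x) enc v := by
  classical
  unfold rk
  refine meas_tsum fun v' => ?_
  exact Measurable.ite (measurableSet_rk_rel hL enc v' v) measurable_const measurable_const

end rank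

section code

variable {G X : Type*}

open Classical in
/-- cost of the symbol `j` in position `i` -/
noncomputable def lam [Group G] [MulAction G X] (g : ℕ → G) (B : Set X) (f : ℕ → X → ℝ≥0∞)
    (i j : ℕ) (x : X) : ℝ≥0∞ :=
  if (g i)⁻¹ • x ∈ firstHit g B i then nlg (f j ((g i)⁻¹ • x)) else if j = 0 then 0 else ⊤

/-- total cost -/
noncomputable def Lam [Group G] [MulAction G X] (g : ℕ → G) (B : Set X) (f : ℕ → X → ℝ≥0∞)
    (v : ℕ →₀ ℕ) (x : X) : ℝ≥0∞ := ∑' i, lam g B f i (v i) x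

lemma measurable_Lam [Group G] [MulAction G X] {M : MeasurableSpace X} (hM : InvariantAlg G M)
    (g : ℕ → G) {B : Set X} (hB : MeasurableSet B) {f : ℕ → X → ℝ≥0∞} (hf : ∀ j, Measurable (f j))
    (v : ℕ →₀ ℕ) : Measurable (Lam g B f v) := by
  classical
  unfold Lam
  refine meas_tsum fun i => ?_
  have hs : Measurable fun x : X => (g i)⁻¹ • x := fun A hA => hM _ _ hA
  unfold lam
  exact Measurable.ite (hs (measurableSet_firstHit hM g hB i))
    (measurable_nlg.comp ((hf _).comp hs)) measurable_const

lemma sum_kex_Lam [Group G] [MulAction G X] (g : ℕ → G) (B : Set X) (f : ℕ → X → ℝ≥0∞) (x : X)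
    (h : ∀ h : G, ∑' j, f j (h • x) = 1) : ∑' v, kex (Lam g B f v x) ≤ 1 := by
  classical
  refine kraft (fun i j => lam g B f i j x) fun i => ?_
  unfold lam
  split_ifs with hi
  · rw [← h (g i)⁻¹]
    refine ENNReal.tsum_le_tsum fun j => ?_
    rw [kex_nlg]
    rw [← h (g i)⁻¹]
    exact ENNReal.le_tsum j
  · rw [tsum_eq_single 0]
    · simp [kex_zero]
    · intro j hj
      simp [hj, kex_top]

/-- the set used for decoding -/
def decSet [Group G] [MulAction G X] (g : ℕ → G) (B : Set X) (f : ℕ → X → ℝ≥0∞)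
    (enc : (ℕ →₀ ℕ) → ℕ) (lab : X → ℕ) (v : ℕ →₀ ℕ) : Set X :=
  {b | lab b = ⌊(rk (fun v => Lam g B f v b) enc v).toReal⌋₊ + 1 ∧ Lam g B f v b ≠ ⊤}

lemma measurableSet_decSet [Group G] [MulAction G X] {M : MeasurableSpace X}
    (hM : InvariantAlg G M)
    (g : ℕ → G) {B : Set X} (hB : MeasurableSet B) {f : ℕ → X → ℝ≥0∞} (hf : ∀ j, Measurable (f j))
    (enc : (ℕ →₀ ℕ) → ℕ) {lab : X → ℕ} (hlab : Measurable lab) (v : ℕ →₀ ℕ) :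
    MeasurableSet (decSet g B f enc lab v) := by
  have hL := measurable_Lam hM g hB hf
  have h1 : Measurable fun b => ⌊(rk (fun v => Lam g B f v b) enc v).toReal⌋₊ + 1 :=
    (Nat.measurable_floor.comp (measurable_rk hL enc v).ennreal_toReal).add_const 1
  exact (measurableSet_eq_fun hlab h1).inter (hL v (measurableSet_singleton ⊤)).compl

end code


set_option linter.unusedSectionVars false

section coding

variable {G X : Type*} {A : MeasurableSpace X} [Group G] [MulAction G X]
  [Countable G] [mX : MeasurableSpace X] {μ : Measure X}

lemma satur_eq_iUnion {g : ℕ → G} (hg : Surjective g) (B : Set X) :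
    satur G B = ⋃ i, firstHit g B i := by
  ext x
  constructor
  · exact fun hx => mem_iUnion.2 (exists_firstHit hg hx)
  · intro hx
    obtain ⟨i, hi⟩ := mem_iUnion.1 hx
    exact ⟨g i, hi.1⟩

lemma lintegral_push (hpmp : IsPmp G μ) {g : ℕ → G} (hg : Surjective g) {B : Set X}
    (hB : MeasurableSet B) {u : X → ℝ≥0∞} (hu : Measurable u) :
    ∫⁻ x, ∑' i, (firstHit g B i).indicator u ((g i)⁻¹ • x) ∂μ = ∫⁻ x in satur G B, u x ∂μ := by
  have hC : ∀ i, MeasurableSet (firstHit g B i) :=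
    fun i => measurableSet_firstHit (invariant_top hpmp) g hB i
  have hm : ∀ i, Measurable ((firstHit g B i).indicator u) := fun i => hu.indicator (hC i)
  rw [lintegral_tsum (f := fun i x => (firstHit g B i).indicator u ((g i)⁻¹ • x))
    fun i => ((hm i).comp (hpmp (g i)⁻¹).measurable).aemeasurable,
    satur_eq_iUnion hg, lintegral_iUnion hC]
  · refine tsum_congr fun i => ?_
    rw [(hpmp (g i)⁻¹).lintegral_comp (hm i), lintegral_indicator (hC i)]
  · intro i k hik
    exact Set.disjoint_left.2 fun x hx hx' => hik (firstHit_unique hx hx')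

variable [IsProbabilityMeasure μ]

lemma lintegral_infoFun (hA : A ≤ mX) {α : ℕ → Set X} (hα : IsPartition α) {Q : Set X}
    (hQ : MeasurableSet[A] Q) :
    ∫⁻ x in Q, ∑' j, (α j).indicator (fun x => nlg (cpr A μ (α j) x)) x ∂μ
      = ∫⁻ x in Q, ∑' j, eta (cpr A μ (α j) x) ∂μ := by
  have hc : ∀ j, Measurable (cpr A μ (α j)) := fun j => (measurable_cpr (α j)).mono hA le_rfl
  rw [lintegral_tsum (f := fun j => (α j).indicator fun x => nlg (cpr A μ (α j) x))
    fun j => (measurable_nlg.comp (hc j)).aemeasurable.indicator (hα.1 j),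
    lintegral_tsum (f := fun j x => eta (cpr A μ (α j) x)) fun j => (measurable_eta.comp (hc j)).aemeasurable]
  refine tsum_congr fun j => ?_
  rw [setLIntegral_indicator (hα.1 j), setLIntegral_info hA (hα.1 j) hQ]

lemma exists_index {α : ℕ → Set X} (hα : IsPartition α) :
    ∃ idx : X → ℕ, Measurable idx ∧ ∀ x j, x ∈ α j ↔ idx x = j := by
  have hU : ∀ x, ∃ j, x ∈ α j := fun x => by
    have : x ∈ ⋃ i, α i := by rw [hα.2.2]; trivial
    exact mem_iUnion.1 this
  choose idx hidx using hU
  have key : ∀ x j, x ∈ α j ↔ idx x = j := by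
    intro x j
    constructor
    · intro hx
      by_contra hne
      exact Set.disjoint_left.1 (hα.2.1 hne) (hidx x) hx
    · rintro rfl; exact hidx x
  refine ⟨idx, measurable_to_countable' fun j => ?_, key⟩
  have : idx ⁻¹' {j} = α j := by ext x; simp [key]
  rw [this]; exact hα.1 j

lemma coding (hpmp : IsPmp G μ) (hA : A ≤ mX) {α : ℕ → Set X} (hα : IsPartition α)
    {B : Set X} (hB : MeasurableSet B) (hQ : MeasurableSet[A] (satur G B))
    (hfin : ∫⁻ x in satur G B, ∑' j, eta (cpr A μ (α j) x) ∂μ ≠ ⊤) :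
    ∃ lab : X → ℕ, Measurable lab ∧ (∀ x, lab x = 0 ↔ x ∉ B) ∧
      ∫⁻ x in B, ENNReal.ofReal (Real.log (lab x)) ∂μ ≤
        ∫⁻ x in satur G B, ∑' j, eta (cpr A μ (α j) x) ∂μ ∧
      ∀ M : MeasurableSpace X, InvariantAlg G M →
        (∀ s t : Set X, MeasurableSet[M] s → (∀ᵐ x ∂μ, x ∈ t ↔ x ∈ s) → MeasurableSet[M] t) →
        A ≤ M → (∀ k, MeasurableSet[M] (lab ⁻¹' {k})) →
        ∀ j, MeasurableSet[M] (α j ∩ satur G B) := by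
  classical
  obtain ⟨g, hg⟩ := exists_surjective_nat G
  obtain ⟨enc, henc⟩ := exists_injective_nat (ℕ →₀ ℕ)
  obtain ⟨idx, hidxm, hidx⟩ := exists_index hα
  set f : ℕ → X → ℝ≥0∞ := fun j => cpr A μ (α j) with hf
  have hfA : ∀ j, Measurable[A] (f j) := fun j => measurable_cpr (α j)
  have hfm : ∀ j, Measurable (f j) := fun j => (hfA j).mono hA le_rfl
  set info : X → ℝ≥0∞ := fun x => ∑' j, (α j).indicator (fun x => nlg (f j x)) x with hinfo
  have hinfom : Measurable info :=
    meas_tsum fun j => (measurable_nlg.comp (hfm j)).indicator (hα.1 j)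
  have hinfo_eq : ∀ x, info x = nlg (f (idx x) x) := by
    intro x
    simp only [hinfo]
    rw [tsum_eq_single (idx x)]
    · rw [Set.indicator_of_mem ((hidx x _).2 rfl)]
    · intro j hj
      exact Set.indicator_of_notMem (fun h => hj ((hidx x j).1 h).symm) _
  let act : ℕ → Set X := fun i => {x | (g i)⁻¹ • x ∈ firstHit g B i}
  have hact : ∀ i, MeasurableSet (act i) := fun i =>
    (hpmp (g i)⁻¹).measurable (measurableSet_firstHit (invariant_top hpmp) g hB i)
  have act_B : ∀ {i x}, x ∈ act i → x ∈ B := fun {i x} h => by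
    have : (g i)⁻¹ • x ∈ firstHit g B i := h
    simpa using this.1
  let w : ℕ → X → ℕ := fun i x => if x ∈ act i then idx ((g i)⁻¹ • x) else 0
  have hw : ∀ i, Measurable (w i) := fun i =>
    Measurable.ite (hact i) (hidxm.comp (hpmp (g i)⁻¹).measurable) measurable_const
  let Lw : X → ℝ≥0∞ := fun x => ∑' i, (firstHit g B i).indicator info ((g i)⁻¹ • x)
  have hLw : ∫⁻ x, Lw x ∂μ = ∫⁻ x in satur G B, ∑' j, eta (cpr A μ (α j) x) ∂μ := by
    rw [← lintegral_infoFun hA hα hQ]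
    exact lintegral_push hpmp hg hB hinfom
  have hC : ∀ i, MeasurableSet (firstHit g B i) :=
    fun i => measurableSet_firstHit (invariant_top hpmp) g hB i
  have hLwm : Measurable Lw :=
    meas_tsum fun i => (hinfom.indicator (hC i)).comp (hpmp (g i)⁻¹).measurable
  have hLwfin : ∀ᵐ x ∂μ, Lw x < ⊤ := ae_lt_top hLwm (by rw [hLw]; exact hfin)
  have hcnt : ∀ᵐ x ∂μ, ∑' i, (firstHit g B i).indicator (fun _ => (1 : ℝ≥0∞)) ((g i)⁻¹ • x) < ⊤ := by
    refine ae_lt_top (meas_tsum fun i =>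
      ((measurable_const.indicator (hC i)).comp (hpmp (g i)⁻¹).measurable)) ?_
    rw [lintegral_push hpmp hg hB measurable_const]
    simp
  have hsum : ∀ᵐ x ∂μ, ∀ h : G, ∑' j, f j (h • x) = 1 := by
    refine ae_all_iff.2 fun h => ?_
    exact (hpmp h).quasiMeasurePreserving.ae (tsum_cpr (μ := μ) hA hα.1 hα.2.1 hα.2.2)
  -- the good points
  let good : X → Prop := fun x => (∀ h : G, ∑' j, f j (h • x) = 1) ∧
    ∃ v : ℕ →₀ ℕ, (∀ i, v i = w i x) ∧ Lam g B f v x = Lw x ∧ Lam g B f v x ≠ ⊤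
  have hgood : ∀ᵐ x ∂μ, good x := by
    filter_upwards [hLwfin, hcnt, hsum] with x h1 h2 h3
    refine ⟨h3, ?_⟩
    have hfinact : {i | x ∈ act i}.Finite := by
      refine (ENNReal.finite_const_le_of_tsum_ne_top h2.ne one_ne_zero).subset ?_
      intro i hi
      have : (g i)⁻¹ • x ∈ firstHit g B i := hi
      simp [this]
    have hfs : (Function.support fun i => w i x).Finite := by
      refine hfinact.subset fun i hi => ?_
      by_contra hn
      apply hi
      have hn' : x ∉ act i := hn
      simp only [w, hn', if_false]
    let v : ℕ →₀ ℕ := Finsupp.ofSupportFinite (fun i => w i x) hfs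
    have hv : ∀ i, v i = w i x := fun i => rfl
    have hL : Lam g B f v x = Lw x := by
      refine tsum_congr fun i => ?_
      rw [hv]
      by_cases hi : x ∈ act i
      · have hi' : (g i)⁻¹ • x ∈ firstHit g B i := hi
        simp only [lam, w, hi, hi', if_true, Set.indicator_of_mem, hinfo_eq]
      · have hi' : (g i)⁻¹ • x ∉ firstHit g B i := hi
        simp only [lam, w, hi, hi', if_false, Set.indicator_of_notMem, if_true, not_false_eq_true]
    exact ⟨v, hv, hL, by rw [hL]; exact h1.ne⟩
  have hLamm := measurable_Lam (invariant_top hpmp) g hB hfm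
  let R : X → ℝ≥0∞ := fun x => ∑' v : ℕ →₀ ℕ,
    if ∀ i, v i = w i x then rk (fun v => Lam g B f v x) enc v else 0
  have hR : Measurable R := by
    refine meas_tsum fun v => Measurable.ite ?_ (measurable_rk hLamm enc v) measurable_const
    rw [ofPred_forall]
    exact MeasurableSet.iInter fun i => measurableSet_eq_fun measurable_const (hw i)
  have hR_eq : ∀ x (v : ℕ →₀ ℕ), (∀ i, v i = w i x) → R x = rk (fun v => Lam g B f v x) enc v := by
    intro x v hv
    simp only [R]
    rw [tsum_eq_single v]
    · simp only [hv, implies_true, if_true]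
    · intro v' hv'
      rw [if_neg]
      intro h
      exact hv' (Finsupp.ext fun i => (h i).trans (hv i).symm)
  let lab : X → ℕ := fun x => if x ∈ B then ⌊(R x).toReal⌋₊ + 1 else 0
  have hlab : Measurable lab := Measurable.ite hB
    ((Nat.measurable_floor.comp hR.ennreal_toReal).add_const 1) measurable_const
  have hlab0 : ∀ x, lab x = 0 ↔ x ∉ B := by
    intro x
    by_cases hx : x ∈ B <;> simp [lab, hx]
  refine ⟨lab, hlab, hlab0, ?_, ?_⟩
  · rw [← hLw]
    refine (setLIntegral_mono_ae' hB ?_).trans (setLIntegral_le_lintegral B _)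
    filter_upwards [hgood] with x hx hxB
    obtain ⟨h1, v, hv, hL, hLt⟩ := hx
    have h2 := (rk_log (fun v => Lam g B f v x) enc (sum_kex_Lam g B f x h1) (v := v) hLt).2
    simp only [lab, hxB, if_true, hR_eq x v hv]
    rw [← hL]
    exact h2
  · have hall : ∀ᵐ x ∂μ, ∀ h : G, good (h • x) :=
      ae_all_iff.2 fun h => (hpmp h).quasiMeasurePreserving.ae hgood
    intro M hM hcl hAM hlabM j
    have hfM : ∀ j, Measurable[M] (f j) := fun j => (hfA j).mono hAM le_rfl
    have hlabM' : Measurable[M] lab := @measurable_to_countable' _ _ _ _ M lab hlabM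
    have hBM : MeasurableSet[M] B := by
      have : B = (lab ⁻¹' {0})ᶜ := by ext x; simp [hlab0]
      rw [this]; exact MeasurableSet.compl (hlabM 0)
    have hdec := fun v => measurableSet_decSet hM g hBM hfM enc hlabM' v
    refine hcl (⋃ i, firstHit g B i ∩ (fun x => g i • x) ⁻¹'
      (⋃ v : ℕ →₀ ℕ, ⋃ (_ : v i = j), decSet g B f enc lab v)) _ ?_ ?_
    · refine MeasurableSet.iUnion fun i => MeasurableSet.inter (measurableSet_firstHit hM g hBM i)
        (hM _ _ (MeasurableSet.iUnion fun v => MeasurableSet.iUnion fun _ => hdec v))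
    · filter_upwards [hall] with x hx
      have key : ∀ i, x ∈ firstHit g B i →
          (g i • x ∈ (⋃ v : ℕ →₀ ℕ, ⋃ (_ : v i = j), decSet g B f enc lab v) ↔ idx x = j) := by
        intro i hi
        obtain ⟨h1, v, hv, hL, hLt⟩ := hx (g i)
        have hb : g i • x ∈ B := hi.1
        have hact' : g i • x ∈ act i := by
          change (g i)⁻¹ • g i • x ∈ firstHit g B i
          rwa [inv_smul_smul]
        have hwi : w i (g i • x) = idx x := by
          simp only [w, hact', if_true, inv_smul_smul]
        have hlabv : lab (g i • x) = ⌊(rk (fun v => Lam g B f v (g i • x)) enc v).toReal⌋₊ + 1 := by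
          simp only [lab, hb, if_true, hR_eq _ v hv]
        have hk := sum_kex_Lam g B f (g i • x) h1
        constructor
        · intro h
          simp only [mem_iUnion] at h
          obtain ⟨v', hv'j, hd1, hd2⟩ := h
          have hvv : v = v' := by
            refine rk_inj _ henc (rk_log _ enc hk hLt).1 (rk_log _ enc hk hd2).1 ?_
            have := hlabv.symm.trans hd1
            omega
          rw [← hwi, ← hv, hvv, hv'j]
        · intro h
          simp only [mem_iUnion]
          exact ⟨v, by rw [hv, hwi, h], hlabv, hLt⟩
      constructor
      · rintro ⟨hxj, hxQ⟩
        obtain ⟨i, hi⟩ := exists_firstHit hg hxQ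
        exact mem_iUnion.2 ⟨i, hi, (key i hi).2 ((hidx x j).1 hxj)⟩
      · intro h
        obtain ⟨i, hi, hi2⟩ := mem_iUnion.1 h
        exact ⟨(hidx x j).2 ((key i hi).1 hi2), ⟨g i, hi.1⟩⟩

end coding


set_option linter.unusedSectionVars false

section smooth

variable {G X : Type*} {A A' m : MeasurableSpace X} [Group G] [MulAction G X]
  [Countable G] [mX : MeasurableSpace X] {μ : Measure X}

/-- Every Borel subset of the saturation of a partial transversal is generated by it. -/
lemma onePer_all (hpmp : IsPmp G μ) (hI : invSigma G X ≤ m) (hm : InvariantAlg G m) {Y : Set X}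
    (hY : MeasurableSet Y) (hYm : MeasurableSet[m] Y) (hYo : OnePer G Y) {s : Set X}
    (hs : MeasurableSet s) : MeasurableSet[m] (s ∩ satur G Y) := by
  have : s ∩ satur G Y = ⋃ g : G, (fun x => g • x) ⁻¹' Y ∩
      satur G (Y ∩ (fun x => g⁻¹ • x) ⁻¹' s) := by
    ext x
    constructor
    · rintro ⟨hxs, g, hg⟩
      exact mem_iUnion.2 ⟨g, hg, g, hg, by simpa using hxs⟩
    · intro h
      obtain ⟨g, hg, h, hh1, hh2⟩ := mem_iUnion.1 h
      have hg' : g • x ∈ Y := hg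
      refine ⟨?_, g, hg⟩
      have h1 := hYo _ hg' (h * g⁻¹) (by simpa [mul_smul] using hh1)
      have h2 : h • x = g • x := by simpa [mul_smul] using h1
      have h3 : g⁻¹ • h • x ∈ s := hh2
      rw [h2] at h3
      simpa using h3
  rw [this]
  refine MeasurableSet.iUnion fun g => MeasurableSet.inter (hm g _ hYm) (hI _ ?_)
  exact satur_mem_invSigma hpmp (hY.inter ((hpmp g⁻¹).measurable hs))

lemma pmp_restrict (hpmp : IsPmp G μ) {P : Set X} (hP : MeasurableSet P)
    (hPi : ∀ g : G, (fun x => g • x) ⁻¹' P = P) : IsPmp G (μ.restrict P) := by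
  intro g
  have := (hpmp g).restrict_preimage hP
  rwa [hPi g] at this

lemma step_evm {ν : Measure X} {α : ℕ → Set X} (hν : IsPmp G ν)
    (hm : InvariantAlg G m) (hac : ν ≪ μ)
    (hst : ∀ s, MeasurableSet[A'] s → MeasurableSet[evm (mX := mX) (sigmaG G (range α) ⊔ A) μ] s)
    (hA : ∀ s, MeasurableSet[A] s → MeasurableSet[evm (mX := mX) m ν] s)
    (hα : ∀ j, MeasurableSet[evm (mX := mX) m ν] (α j)) :
    ∀ s, MeasurableSet[A'] s → MeasurableSet[evm (mX := mX) m ν] s := by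
  intro s hs
  obtain ⟨t, ht, hst'⟩ := hst s hs
  have h1 : sigmaG G (range α) ⊔ A ≤ evm (mX := mX) m ν := by
    refine sup_le (sigmaG_le (invariant_evm hν hm) ?_) hA
    rintro _ ⟨j, rfl⟩
    exact hα j
  refine evm_congr (h1 _ ht) ?_
  have := hac.ae_le hst'
  filter_upwards [this] with x hx
  exact Eq.to_iff hx

variable [IsProbabilityMeasure μ]

lemma cpr_zero_of_null (hm : m ≤ mX) {s D : Set X} (hs : MeasurableSet s)
    (hD : MeasurableSet[m] D) (h : μ (s ∩ D) = 0) : ∀ᵐ x ∂μ, x ∈ D → cpr m μ s x = 0 := by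
  rw [← setLIntegral_cpr hm hs hD,
    lintegral_eq_zero_iff ((measurable_cpr s).mono hm le_rfl)] at h
  exact (ae_restrict_iff' (hm _ hD)).1 h

lemma onePer_le (hpmp : IsPmp G μ) (hI : invSigma G X ≤ m) (hm : m ≤ mX) {Y s : Set X}
    (hY : MeasurableSet Y) (hYo : OnePer G Y) (hs : MeasurableSet s) :
    ∀ᵐ x ∂μ, cpr m μ s x ≠ 0 → cpr m μ Y x ≤ cpr m μ s x := by
  let E : Set X := {x | cpr m μ s x ≠ 0}
  have hE : MeasurableSet[m] E :=
    MeasurableSet.compl (measurable_cpr s (measurableSet_singleton 0))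
  have : E.indicator (cpr m μ Y) ≤ᵐ[μ] cpr m μ s := by
    refine ae_le_of_setLIntegral hm (Measurable.indicator (measurable_cpr Y) hE)
      (measurable_cpr s) fun D hD => ?_
    have hED : MeasurableSet[m] (E ∩ D) := MeasurableSet.inter hE hD
    rw [setLIntegral_indicator (hm _ hE), setLIntegral_cpr hm hY hED, setLIntegral_cpr hm hs hD]
    have hT : MeasurableSet (s ∩ (E ∩ D)) := hs.inter (hm _ hED)
    refine (transport hpmp (hY.inter (hm _ hED)) (fun x hx g hg => hYo x hx.1 g hg.1) hT ?_).trans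
      (measure_mono (inter_subset_inter_right _ inter_subset_right))
    have hJ : MeasurableSet[m] (satur G (s ∩ (E ∩ D)))ᶜ :=
      MeasurableSet.compl (hI _ (satur_mem_invSigma hpmp hT))
    have h0 := cpr_zero_of_null (μ := μ) hm hs (MeasurableSet.inter hED hJ) (by
      rw [← inter_assoc]
      have : s ∩ (E ∩ D) ∩ (satur G (s ∩ (E ∩ D)))ᶜ = ∅ := by
        rw [← Set.sdiff_eq, Set.sdiff_eq_empty]; exact subset_satur _
      rw [this, measure_empty])
    filter_upwards [h0] with x hx hxY
    by_contra hc
    exact hxY.2.1 (hx ⟨hxY.2, hc⟩)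
  filter_upwards [this] with x hx hxE
  have hxE' : x ∈ E := hxE
  simpa [hxE'] using hx

lemma cpr_add_compl (hm : m ≤ mX) {s : Set X} (hs : MeasurableSet s) :
    ∀ᵐ x ∂μ, cpr m μ sᶜ x = 1 - cpr m μ s x := by
  have : (fun x => cpr m μ s x + cpr m μ sᶜ x) =ᵐ[μ] fun _ => 1 := by
    refine ae_eq_of_setLIntegral hm (Measurable.add (measurable_cpr s) (measurable_cpr sᶜ))
      (@measurable_const _ _ _ m _) fun D hD => ?_
    rw [lintegral_add_left ((measurable_cpr s).mono hm le_rfl), setLIntegral_cpr hm hs hD,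
      setLIntegral_cpr hm hs.compl hD]
    rw [inter_comm s, inter_comm sᶜ, ← Set.sdiff_eq, measure_inter_add_sdiff _ hs]
    simp
  filter_upwards [this, cpr_le_one (μ := μ) hm hs] with x hx h1
  refine ENNReal.eq_sub_of_add_eq (ne_top_of_le_ne_top ENNReal.one_ne_top h1) ?_
  rw [add_comm]; exact hx

/-- comparison of a partial transversal with a nontrivial partition -/
lemma onePer_entropy (hpmp : IsPmp G μ) (hI : invSigma G X ≤ m) (hm : m ≤ mX) {Y : Set X}
    (hY : MeasurableSet Y) (hYo : OnePer G Y) {α : ℕ → Set X} (hα : IsPartition α) :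
    ∀ᵐ x ∂μ, (∃ j, cpr m μ (α j) x ≠ 0 ∧ cpr m μ (α j) x ≠ 1) →
      eta (cpr m μ Y x) + eta (1 - cpr m μ Y x) ≤ ∑' j, eta (cpr m μ (α j) x) := by
  have h1 := ae_all_iff.2 fun j => onePer_le hpmp hI hm hY hYo (hα.1 j)
  have h2 := ae_all_iff.2 fun j => onePer_le hpmp hI hm hY hYo (hα.1 j).compl
  have h3 := ae_all_iff.2 fun j => cpr_add_compl (μ := μ) hm (hα.1 j)
  have h4 := ae_all_iff.2 fun j => cpr_le_one (μ := μ) hm (hα.1 j)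
  filter_upwards [h1, h2, h3, h4, tsum_cpr (μ := μ) hm hα.1 hα.2.1 hα.2.2] with x h1 h2 h3 h4 h5
  rintro ⟨j, hj0, hj1⟩
  refine entropy_lower _ h5 j _ (h1 j hj0) ?_
  rw [← h3 j]
  apply h2 j
  rw [h3 j]
  exact (tsub_pos_of_lt (lt_of_le_of_ne (h4 j) hj1)).ne'

end smooth


set_option linter.unusedSectionVars false

lemma eta_zero : eta 0 = 0 := by simp [eta]

lemma eta_one : eta 1 = 0 := by simp [eta]

/-- The smooth part: one transversal is enough. -/
lemma smooth_core {G X : Type*} {A : ℕ → MeasurableSpace X} [Group G] [MulAction G X]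
    [Countable G] [mX : MeasurableSpace X] {μ : Measure X} [IsProbabilityMeasure μ]
    (hpmp : IsPmp G μ) (hA : ∀ n, A n ≤ mX) (hmono : ∀ n, A 0 ≤ A n)
    (hinv : InvariantAlg G (A 0)) (hI : invSigma G X ≤ A 0) {α : ℕ → ℕ → Set X}
    (hα : ∀ n, IsPartition (α n))
    (hst : ∀ n s, MeasurableSet[A (n + 1)] s →
      MeasurableSet[evm (mX := mX) (sigmaG G (range (α n)) ⊔ A n) μ] s)
    {Y0 : Set X} (hY0 : MeasurableSet Y0) (hY0o : OnePer G Y0) :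
    ∃ Y, MeasurableSet Y ∧ OnePer G Y ∧ satur G Y ⊆ satur G Y0 ∧
      (∀ᵐ x ∂μ, x ∈ satur G Y0 → eta (cpr (A 0) μ Y x) + eta (1 - cpr (A 0) μ Y x) ≤
        ∑' n, ∑' j, eta (cpr (A n) μ (α n j) x)) ∧
      ∀ x, x ∈ satur G Y0 → x ∉ satur G Y → ∀ n j,
        cpr (A n) μ (α n j) x = 0 ∨ cpr (A n) μ (α n j) x = 1 := by
  set P := satur G Y0 with hPdef
  have hIn : ∀ n, invSigma G X ≤ A n := fun n => hI.trans (hmono n)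
  have hPI : MeasurableSet[invSigma G X] P := satur_mem_invSigma hpmp hY0
  let N : ℕ → Set X := fun n => P ∩ ⋃ j, {x | cpr (A n) μ (α n j) x = 0 ∨ cpr (A n) μ (α n j) x = 1}ᶜ
  have hNA : ∀ n, MeasurableSet[A n] (N n) := fun n =>
    MeasurableSet.inter (hIn n _ hPI) (MeasurableSet.iUnion fun j => MeasurableSet.compl
      (MeasurableSet.union (measurable_cpr (α n j) (measurableSet_singleton 0))
        (measurable_cpr (α n j) (measurableSet_singleton 1))))
  have hNm : ∀ n, MeasurableSet (N n) := fun n => hA n _ (hNA n)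
  have hNmem : ∀ {n x}, x ∈ P → x ∉ N n → ∀ j,
      cpr (A n) μ (α n j) x = 0 ∨ cpr (A n) μ (α n j) x = 1 := by
    intro n x hx hxN j
    by_contra hc
    exact hxN ⟨hx, mem_iUnion.2 ⟨j, hc⟩⟩
  let PP : ℕ → Set X := fun n => P ∩ satur G (N n) ∩ ⋂ k, ⋂ (_ : k < n), (satur G (N k))ᶜ
  have hPPI : ∀ n, MeasurableSet[invSigma G X] (PP n) := fun n =>
    MeasurableSet.inter (MeasurableSet.inter hPI (satur_mem_invSigma hpmp (hNm n)))
      (MeasurableSet.iInter fun k => MeasurableSet.iInter fun _ =>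
        MeasurableSet.compl (satur_mem_invSigma hpmp (hNm k)))
  have hPPm : ∀ n, MeasurableSet (PP n) := fun n => invSigma_le _ (hPPI n)
  have hPPmem : ∀ n x, x ∈ PP n ↔ x ∈ P ∧ x ∈ satur G (N n) ∧ ∀ k < n, x ∉ satur G (N k) := by
    intro n x
    simp [PP, and_assoc]
  have hPPsm : ∀ n (g : G) x, g • x ∈ PP n ↔ x ∈ PP n := by
    intro n g x
    simp only [hPPmem, hPdef, smul_mem_satur]
  have hPPu : ∀ {n k x}, x ∈ PP n → x ∈ PP k → n = k := by
    intro n k x hn hk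
    rw [hPPmem] at hn hk
    rcases lt_trichotomy n k with h | h | h
    · exact absurd hn.2.1 (hk.2.2 n h)
    · exact h
    · exact absurd hk.2.1 (hn.2.2 k h)
  have hPPex : ∀ {n x}, x ∈ P → x ∈ satur G (N n) → ∃ k, x ∈ PP k := by
    classical
    intro n x hx hn
    have : ∃ n, x ∈ satur G (N n) := ⟨n, hn⟩
    exact ⟨Nat.find this, (hPPmem _ _).2 ⟨hx, Nat.find_spec this, fun k hk => Nat.find_min this hk⟩⟩
  obtain ⟨Y, hY, hYN, hYo, hYs⟩ := exists_onePer_subset hpmp hY0 hY0o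
    (N := ⋃ n, N n ∩ PP n) (MeasurableSet.iUnion fun n => (hNm n).inter (hPPm n))
  have hYPP : ∀ n, Y ∩ PP n ⊆ N n := by
    rintro n y ⟨hy, hyn⟩
    obtain ⟨k, hk1, hk2⟩ := mem_iUnion.1 (hYN hy)
    rw [hPPu hyn hk2]
    exact hk1
  have hPPsub : ∀ n, PP n ⊆ satur G Y := by
    intro n x hx
    rw [hYs]
    obtain ⟨h1, ⟨g, hg⟩, h3⟩ := (hPPmem n x).1 hx
    exact ⟨⟨g, mem_iUnion.2 ⟨n, hg, (hPPsm n g x).2 hx⟩⟩, h1⟩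
  have hagree : ∀ n k, k ≤ n → ∀ s, MeasurableSet[A k] s →
      MeasurableSet[evm (mX := mX) (A 0) (μ.restrict (PP n))] s := by
    intro n k
    induction k with
    | zero => exact fun _ s hs => le_evm s hs
    | succ k ih =>
      intro hk
      refine step_evm (pmp_restrict hpmp (hPPm n) fun g => Set.ext fun x => hPPsm n g x) hinv
        Measure.restrict_le_self.absolutelyContinuous (hst k) (ih (by omega)) ?_
      intro j
      have h1 : MeasurableSet[A k] {x | cpr (A k) μ (α k j) x = 1} :=
        measurable_cpr (α k j) (measurableSet_singleton 1)
      refine evm_congr (ih (by omega) _ h1) ?_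
      refine (ae_restrict_iff' (hPPm n)).2 ?_
      filter_upwards [ae_mem_iff_cpr_eq_one (μ := μ) (hA k) ((hα k).1 j)] with x hx hxP
      obtain ⟨h1, h2, h3⟩ := (hPPmem n x).1 hxP
      exact hx (hNmem h1 (fun h => h3 k (by omega) (subset_satur _ h)) j)
  have hcpr : ∀ᵐ x ∂μ, ∀ n, x ∈ PP n → cpr (A n) μ Y x = cpr (A 0) μ Y x := by
    refine ae_all_iff.2 fun n => cpr_eq_of_agree (hmono n) (hA n) hY (hI _ (hPPI n)) ?_
    intro D hD
    exact hagree n n le_rfl D hD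
  have hoff : ∀ᵐ x ∂μ, ∀ n, x ∈ PP n ∩ (N n)ᶜ → cpr (A n) μ Y x = 0 := by
    refine ae_all_iff.2 fun n => cpr_zero_of_null (hA n) hY
      (MeasurableSet.inter (hIn n _ (hPPI n)) (MeasurableSet.compl (hNA n))) ?_
    have : Y ∩ (PP n ∩ (N n)ᶜ) = ∅ := by
      rw [← inter_assoc, ← Set.sdiff_eq, Set.sdiff_eq_empty]
      exact hYPP n
    rw [this, measure_empty]
  have hoff2 : ∀ᵐ x ∂μ, x ∈ (satur G Y)ᶜ → cpr (A 0) μ Y x = 0 := by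
    refine cpr_zero_of_null (hA 0) hY
      (MeasurableSet.compl (hI _ (satur_mem_invSigma hpmp hY))) ?_
    rw [← Set.sdiff_eq, Set.sdiff_eq_empty.2 (subset_satur Y), measure_empty]
  have hent := ae_all_iff.2 fun n => onePer_entropy hpmp (hIn n) (hA n) hY hYo (hα n)
  refine ⟨Y, hY, hYo, by rw [hYs]; exact inter_subset_right, ?_, ?_⟩
  · filter_upwards [hcpr, hoff, hoff2, hent] with x h1 h2 h3 h4 hxP
    by_cases hx : x ∈ satur G Y
    · have hx' := hx
      rw [hYs] at hx'
      obtain ⟨⟨g, hg⟩, -⟩ := hx'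
      obtain ⟨n, hn1, hn2⟩ := mem_iUnion.1 hg
      have hxn : x ∈ PP n := (hPPsm n g x).1 hn2
      refine le_trans ?_ (ENNReal.le_tsum n)
      rw [← h1 n hxn]
      by_cases hxN : x ∈ N n
      · apply h4 n
        obtain ⟨j, hj⟩ := mem_iUnion.1 hxN.2
        exact ⟨j, not_or.1 hj⟩
      · rw [h2 n ⟨hxn, hxN⟩]
        simp [eta_zero, eta_one]
    · rw [h3 hx]
      simp [eta_zero, eta_one]
  · intro x hxP hxY n j
    refine hNmem hxP (fun hxN => ?_) j
    obtain ⟨k, hk⟩ := hPPex hxP (subset_satur _ hxN)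
    exact hxY (hPPsub k hk)


set_option linter.unusedSectionVars false

lemma level {G X : Type*} {A : MeasurableSpace X} [Group G] [MulAction G X]
    [Countable G] [mX : MeasurableSpace X] {μ : Measure X} [IsProbabilityMeasure μ]
    (hpmp : IsPmp G μ) (hA : A ≤ mX) (hI : invSigma G X ≤ A) {α : ℕ → Set X} (hα : IsPartition α)
    (hfin : condEnt A μ α ≠ ⊤) {Y0 : Set X}
    (hsec : ∀ δ : ℝ≥0∞, 0 < δ →
      ∃ B : Set X, MeasurableSet B ∧ satur G B = (satur G Y0)ᶜ ∧ μ B ≤ δ)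
    {ε : ℝ} (hε : 0 < ε) :
    ∃ (l : ℕ → ℝ≥0∞) (lab : X → ℕ), ∑' n, kex (l n) ≤ 1 ∧ Measurable lab ∧
      (∀ x ∈ satur G Y0, lab x = 0) ∧ μ {x | lab x ≠ 0} ≤ ENNReal.ofReal ε ∧
      ∫⁻ x in (satur G Y0)ᶜ, l (lab x) ∂μ ≤
        (∫⁻ x in (satur G Y0)ᶜ, ∑' j, eta (cpr A μ (α j) x) ∂μ) + 3 * ENNReal.ofReal ε ∧
      ∀ M : MeasurableSpace X, InvariantAlg G M →
        (∀ s t : Set X, MeasurableSet[M] s → (∀ᵐ x ∂μ, x ∈ t ↔ x ∈ s) → MeasurableSet[M] t) →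
        A ≤ M → (∀ k, MeasurableSet[M] (lab ⁻¹' {k})) →
        ∀ j, MeasurableSet[M] (α j ∩ (satur G Y0)ᶜ) := by
  set h : ℝ≥0∞ := condEnt A μ α with hh
  set η : ℝ := ε / (h.toReal + 1) with hη
  have hpos : 0 < h.toReal + 1 := by have := ENNReal.toReal_nonneg (a := h); linarith
  have hη0 : 0 < η := div_pos hε hpos
  obtain ⟨b, hb, hk⟩ := exists_code ε η hε hη0
  obtain ⟨B, hB, hBs, hBμ⟩ := hsec (ENNReal.ofReal (min ε (ε / b)))
    (ENNReal.ofReal_pos.2 (lt_min hε (div_pos hε hb)))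
  have hQ : MeasurableSet[A] (satur G B) := hI _ (satur_mem_invSigma hpmp hB)
  have hle : ∫⁻ x in satur G B, ∑' j, eta (cpr A μ (α j) x) ∂μ ≤ h := by
    rw [hh, condEnt_eq]; exact setLIntegral_le_lintegral _ _
  obtain ⟨lab, hlab, hlab0, hlabint, hdec⟩ := coding hpmp hA hα hB hQ (ne_top_of_le_ne_top hfin hle)
  have hset : {x | lab x ≠ 0} = B := by ext x; simp [hlab0]
  rw [← hBs]
  set T := ∫⁻ x in satur G B, ∑' j, eta (cpr A μ (α j) x) ∂μ with hT
  refine ⟨_, lab, hk, hlab, ?_, ?_, ?_, hdec⟩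
  · intro x hx
    rw [hlab0]
    intro hxB
    have : x ∈ satur G B := subset_satur _ hxB
    rw [hBs] at this
    exact this hx
  · rw [hset]
    exact hBμ.trans (ENNReal.ofReal_le_ofReal (min_le_left _ _))
  · have hlogm : Measurable fun x => ENNReal.ofReal (Real.log (lab x)) :=
      ENNReal.measurable_ofReal.comp (Real.measurable_log.comp (measurable_from_top.comp hlab))
    calc _ ≤ ∫⁻ x in satur G B, (ENNReal.ofReal ε + B.indicator (fun x => ENNReal.ofReal b +
            ENNReal.ofReal (1 + η) * ENNReal.ofReal (Real.log (lab x))) x) ∂μ := by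
          apply lintegral_mono
          intro x
          dsimp only
          by_cases hx : x ∈ B
          · have : lab x ≠ 0 := fun h => (hlab0 x).1 h hx
            rw [if_neg this, Set.indicator_of_mem hx]
            exact le_add_self
          · rw [if_pos ((hlab0 x).2 hx)]
            exact le_self_add
      _ ≤ ENNReal.ofReal ε + (ENNReal.ofReal b * μ B + ENNReal.ofReal (1 + η) * T) := by
          rw [lintegral_add_left measurable_const]
          gcongr
          · rw [lintegral_const, Measure.restrict_apply_univ]
            calc _ ≤ ENNReal.ofReal ε * 1 := by gcongr; exact prob_le_one
              _ = _ := mul_one _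
          · refine (setLIntegral_le_lintegral _ _).trans ?_
            rw [lintegral_indicator hB, lintegral_add_left measurable_const, setLIntegral_const,
              lintegral_const_mul _ hlogm]
            gcongr
      _ ≤ ENNReal.ofReal ε + (ENNReal.ofReal ε + (T + ENNReal.ofReal ε)) := by
          gcongr
          · calc ENNReal.ofReal b * μ B ≤ ENNReal.ofReal b * ENNReal.ofReal (ε / b) := by
                  gcongr
                  exact hBμ.trans (ENNReal.ofReal_le_ofReal (min_le_right _ _))
              _ = ENNReal.ofReal ε := by
                  rw [← ENNReal.ofReal_mul hb.le]; congr 1; field_simp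
          · rw [ENNReal.ofReal_add zero_le_one hη0.le, add_mul, ENNReal.ofReal_one, one_mul]
            gcongr
            calc ENNReal.ofReal η * T ≤ ENNReal.ofReal η * h := by gcongr
              _ = ENNReal.ofReal (η * h.toReal) := by
                  rw [ENNReal.ofReal_mul hη0.le, ENNReal.ofReal_toReal hfin]
              _ ≤ ENNReal.ofReal ε := by
                  apply ENNReal.ofReal_le_ofReal
                  rw [hη, div_mul_eq_mul_div, div_le_iff₀ hpos]
                  nlinarith
      _ = T + 3 * ENNReal.ofReal ε := by ring

lemma core {G X : Type*} {A : ℕ → MeasurableSpace X} [Group G] [MulAction G X]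
    [Countable G] [mX : MeasurableSpace X] [StandardBorelSpace X]
    {μ : Measure X} [IsProbabilityMeasure μ]
    (hpmp : IsPmp G μ) (hA : ∀ n, A n ≤ mX) (hmono : ∀ n, A 0 ≤ A n)
    (hinv : InvariantAlg G (A 0)) (hI : invSigma G X ≤ A 0) {α : ℕ → ℕ → Set X}
    (hα : ∀ n, IsPartition (α n))
    (hst : ∀ n s, MeasurableSet[A (n + 1)] s →
      MeasurableSet[evm (mX := mX) (sigmaG G (range (α n)) ⊔ A n) μ] s)
    (hfin : ∀ n, condEnt (A n) μ (α n) ≠ ⊤) {ε : ℕ → ℝ} (hε : ∀ n, 0 < ε n)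
    (hεs : ∑' n, ENNReal.ofReal (ε n) ≠ ⊤) :
    ∃ c : (ℕ →₀ ℕ) → Set X, (∀ v, MeasurableSet (c v)) ∧ Pairwise (Function.onFun Disjoint c) ∧
      (⋃ v, c v) = univ ∧
      condEnt (A 0) μ c ≤ ∑' n, (condEnt (A n) μ (α n) + 3 * ENNReal.ofReal (ε n)) ∧
      ∀ n s, MeasurableSet[A n] s → MeasurableSet[evm (mX := mX) (sigmaG G (range c) ⊔ A 0) μ] s := by
  classical
  obtain ⟨Y0, hY0, hY0o, hsec⟩ := exists_sections hpmp
  obtain ⟨Y, hY, hYo, hYs, hYent, hYoff⟩ := smooth_core hpmp hA hmono hinv hI hα hst hY0 hY0o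
  set P := satur G Y0 with hPdef
  have hPI : MeasurableSet[invSigma G X] P := satur_mem_invSigma hpmp hY0
  have hPm : MeasurableSet P := invSigma_le _ hPI
  have hYP : Y ⊆ P := (subset_satur Y).trans hYs
  have hlev := fun n => level hpmp (hA n) (hI.trans (hmono n)) (hα n) (hfin n) hsec (hε n)
  choose l lab hk hlab hlab0 hlabμ hlint hdec using hlev
  let lab' : ℕ → X → ℕ := fun k x => if x ∈ P then (if k = 0 ∧ x ∈ Y then 1 else 0) else lab k x
  have hlab' : ∀ k, Measurable (lab' k) := fun k => Measurable.ite hPm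
    (Measurable.ite (MeasurableSet.inter (MeasurableSet.const _) hY) measurable_const measurable_const)
    (hlab k)
  let E : (ℕ →₀ ℕ) → Set X := fun u => {x | ∀ k, lab' k x = u k}
  have hEm : ∀ u, MeasurableSet (E u) := by
    intro u
    have : E u = ⋂ k, lab' k ⁻¹' {u k} := by ext x; simp [E]
    rw [this]
    exact MeasurableSet.iInter fun k => hlab' k (measurableSet_singleton _)
  have hEu : ∀ {u v x}, x ∈ E u → x ∈ E v → u = v := fun {u v x} hu hv =>
    Finsupp.ext fun k => (hu k).symm.trans (hv k)
  let γ : X → (ℕ →₀ ℕ) := fun x => if h : ∃ u, x ∈ E u then h.choose else 0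
  have hγE : ∀ {x u}, x ∈ E u → γ x = u := by
    intro x u hx
    have h : ∃ u, x ∈ E u := ⟨u, hx⟩
    simp only [γ, h, dif_pos]
    exact hEu h.choose_spec hx
  let c : (ℕ →₀ ℕ) → Set X := fun v => γ ⁻¹' {v}
  have hcm : ∀ v, MeasurableSet (c v) := by
    intro v
    have : c v = E v ∪ ({x | v = 0} ∩ ⋂ u, (E u)ᶜ) := by
      ext x
      simp only [c, mem_preimage, mem_singleton_iff, mem_union, mem_inter_iff, mem_ofPred_eq,
        mem_iInter, mem_compl_iff]
      by_cases h : ∃ u, x ∈ E u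
      · obtain ⟨u, hu⟩ := h
        rw [hγE hu]
        constructor
        · rintro rfl; exact Or.inl hu
        · rintro (hv | hv)
          · exact hEu hu hv
          · exact absurd hu (hv.2 u)
      · have h0 : γ x = 0 := by simp only [γ, h, dif_neg, not_false_eq_true]
        rw [h0]
        push Not at h
        constructor
        · rintro rfl; exact Or.inr ⟨rfl, h⟩
        · rintro (hv | hv)
          · exact absurd hv (h v)
          · exact hv.1.symm
    rw [this]
    exact (hEm v).union ((MeasurableSet.const _).inter (MeasurableSet.iInter fun u => (hEm u).compl))
  have hcd : Pairwise (Function.onFun Disjoint c) := by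
    intro u v huv
    refine Set.disjoint_left.2 fun x hx hx' => huv ?_
    exact (show γ x = u from hx).symm.trans hx'
  have hcU : (⋃ v, c v) = univ := by
    ext x; simp [c]
  -- almost every point is coded
  have hfinite : ∀ᵐ x ∂μ, {k | lab k x ≠ 0}.Finite := by
    refine ae_finite_setOfPred_mem (s := fun k => {x | lab k x ≠ 0}) ?_
    exact ne_top_of_le_ne_top hεs (ENNReal.tsum_le_tsum hlabμ)
  have hcoded : ∀ᵐ x ∂μ, x ∈ E (γ x) := by
    filter_upwards [hfinite] with x hx
    have hfs : (Function.support fun k => lab' k x).Finite := by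
      refine (hx.union (Set.finite_singleton 0)).subset ?_
      intro k hk'
      by_cases h0 : k = 0
      · right; exact h0
      · left
        intro hl
        apply hk'
        simp only [lab', h0, hl, false_and, if_false, ite_self]
    have : x ∈ E (Finsupp.ofSupportFinite (fun k => lab' k x) hfs) := fun k => rfl
    rwa [hγE this]
  have hγP1 : ∀ x ∈ Y, γ x = Finsupp.single 0 1 := by
    intro x hx
    apply hγE
    intro k
    simp only [lab', hYP hx, hx, if_true, and_true, Finsupp.single_apply, eq_comm]
  have hγP0 : ∀ x ∈ P, x ∉ Y → γ x = 0 := by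
    intro x hx hxY
    apply hγE
    intro k
    simp only [lab', hx, hxY, if_true, and_false, if_false, Finsupp.coe_zero, Pi.zero_apply]
  refine ⟨c, hcm, hcd, hcU, ?_, ?_⟩
  · -- entropy
    have hm0 := hA 0
    have hPA : MeasurableSet[A 0] P := hI _ hPI
    have h10 : (Finsupp.single 0 1 : ℕ →₀ ℕ) ≠ 0 := by simp
    have hc1 : ∀ᵐ x ∂μ, x ∈ P → cpr (A 0) μ (c (Finsupp.single 0 1)) x = cpr (A 0) μ Y x := by
      refine cpr_congr_on hm0 (hcm _) hY hPA ?_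
      ext x
      constructor
      · rintro ⟨h1, h2⟩
        refine ⟨?_, h2⟩
        by_contra hxY
        exact h10 ((show γ x = _ from h1).symm.trans (hγP0 x h2 hxY))
      · rintro ⟨h1, h2⟩
        exact ⟨hγP1 x h1, h2⟩
    have hc0 : ∀ᵐ x ∂μ, x ∈ P → cpr (A 0) μ (c 0) x = cpr (A 0) μ Yᶜ x := by
      refine cpr_congr_on hm0 (hcm _) hY.compl hPA ?_
      ext x
      constructor
      · rintro ⟨h1, h2⟩
        refine ⟨fun hxY => ?_, h2⟩
        exact h10 ((hγP1 x hxY).symm.trans h1)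
      · rintro ⟨h1, h2⟩
        exact ⟨hγP0 x h2 h1, h2⟩
    have hcv : ∀ᵐ x ∂μ, ∀ v, v ≠ 0 → v ≠ Finsupp.single 0 1 → x ∈ P →
        cpr (A 0) μ (c v) x = 0 := by
      refine ae_all_iff.2 fun v => ?_
      by_cases hv0 : v = 0
      · simp [hv0]
      by_cases hv1 : v = Finsupp.single 0 1
      · simp [hv1]
      have : c v ∩ P = ∅ := by
        refine Set.eq_empty_of_forall_notMem ?_
        rintro x ⟨h1, h2⟩
        have h1' : γ x = v := h1
        by_cases hxY : x ∈ Y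
        · exact hv1 (h1'.symm.trans (hγP1 x hxY))
        · exact hv0 (h1'.symm.trans (hγP0 x h2 hxY))
      filter_upwards [cpr_zero_of_null (μ := μ) hm0 (hcm v) hPA (by rw [this, measure_empty])]
        with x hx _ _ hxP using hx hxP
    have hPpart : ∫⁻ x in P, ∑' v, eta (cpr (A 0) μ (c v) x) ∂μ ≤
        ∑' n, ∫⁻ x in P, ∑' j, eta (cpr (A n) μ (α n j) x) ∂μ := by
      rw [← lintegral_tsum (f := fun n x => ∑' j, eta (cpr (A n) μ (α n j) x))
        fun n => (meas_tsum fun j =>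
        measurable_eta.comp ((measurable_cpr (α n j)).mono (hA n) le_rfl)).aemeasurable]
      refine setLIntegral_mono_ae' hPm ?_
      filter_upwards [hc1, hc0, hcv, cpr_add_compl (μ := μ) hm0 hY, hYent] with x h1 h0 hv hco he hxP
      refine le_trans (le_of_eq ?_) (he hxP)
      rw [tsum_eq_sum (s := {Finsupp.single 0 1, 0})]
      · rw [Finset.sum_pair h10, h1 hxP, h0 hxP, hco]
      · intro v hv'
        simp only [Finset.mem_insert, Finset.mem_singleton, not_or] at hv'
        rw [hv v hv'.2 hv'.1 hxP, eta_zero]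
    have hQpart : ∫⁻ x in Pᶜ, ∑' v, eta (cpr (A 0) μ (c v) x) ∂μ ≤
        ∑' n, ((∫⁻ x in Pᶜ, ∑' j, eta (cpr (A n) μ (α n j) x) ∂μ) + 3 * ENNReal.ofReal (ε n)) := by
      let Λ : (ℕ →₀ ℕ) → ℝ≥0∞ := fun v => ∑' k, l k (v k)
      calc _ ≤ ∑' v, Λ v * μ (c v ∩ Pᶜ) :=
            setLIntegral_entropy_le hm0 hcm hcd hcU Λ (kraft l hk) (MeasurableSet.compl hPA)
        _ = ∫⁻ x in Pᶜ, Λ (γ x) ∂μ := by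
            have : ∀ x, Λ (γ x) = ∑' v, (c v).indicator (fun _ => Λ v) x := by
              intro x
              rw [tsum_eq_single (γ x)]
              · rw [Set.indicator_of_mem (show x ∈ c (γ x) from rfl)]
              · intro v hv
                exact Set.indicator_of_notMem (fun h => hv (show γ x = v from h).symm) _
            simp only [this]
            rw [lintegral_tsum (f := fun v => (c v).indicator (fun _ => Λ v))
              fun v => (measurable_const.indicator (hcm v)).aemeasurable]
            refine tsum_congr fun v => ?_
            rw [setLIntegral_indicator (hcm v), setLIntegral_const]
        _ = ∫⁻ x in Pᶜ, ∑' k, l k (lab k x) ∂μ := by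
            refine setLIntegral_congr_fun_ae hPm.compl ?_
            filter_upwards [hcoded] with x hx hxP
            refine tsum_congr fun k => ?_
            rw [← hx k]
            have hxP' : x ∉ P := hxP
            simp only [lab', hxP', if_false]
        _ = ∑' k, ∫⁻ x in Pᶜ, l k (lab k x) ∂μ :=
            lintegral_tsum fun k => (measurable_from_top.comp (hlab k)).aemeasurable
        _ ≤ _ := ENNReal.tsum_le_tsum hlint
    rw [condEnt_eq, ← lintegral_add_compl _ hPm]
    refine (add_le_add hPpart hQpart).trans (le_of_eq ?_)
    rw [← ENNReal.tsum_add]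
    refine tsum_congr fun n => ?_
    rw [condEnt_eq, ← lintegral_add_compl (μ := μ)
      (fun x => ∑' j, eta (cpr (A n) μ (α n j) x)) hPm, add_assoc]
  · -- generation
    have hPA : MeasurableSet[A 0] P := hI _ hPI
    have hYsA : MeasurableSet[A 0] (satur G Y) := hI _ (satur_mem_invSigma hpmp hY)
    have hop : ∀ M : MeasurableSpace X, A 0 ≤ M → InvariantAlg G M → MeasurableSet[M] Y →
        ∀ n j, MeasurableSet[M] (α n j ∩ satur G Y) := fun M h1 h2 h3 n j =>
      @onePer_all G X M _ _ _ mX μ hpmp (hI.trans h1) h2 Y hY h3 hYo _ ((hα n).1 j)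
    let O : ℕ → ℕ → Set X := fun n j => {x | cpr (A n) μ (α n j) x = 1}
    have hO : ∀ n j, MeasurableSet[A n] (O n j) := fun n j =>
      measurable_cpr (α n j) (measurableSet_singleton 1)
    have hOae : ∀ n j, ∀ᵐ x ∂μ, x ∈ P → x ∉ satur G Y → (x ∈ α n j ↔ x ∈ O n j) := by
      intro n j
      filter_upwards [ae_mem_iff_cpr_eq_one (μ := μ) (hA n) ((hα n).1 j)] with x hx h1 h2
      exact hx (hYoff x h1 h2 n j)
    have hm1inv : InvariantAlg G (sigmaG G (range c) ⊔ A 0) := (invariant_sigmaG _).sup hinv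
    have key : ∀ M : MeasurableSpace X, InvariantAlg G M →
        (∀ s t : Set X, MeasurableSet[M] s → (∀ᵐ x ∂μ, x ∈ t ↔ x ∈ s) → MeasurableSet[M] t) →
        sigmaG G (range c) ⊔ A 0 ≤ M → ∀ n, A n ≤ M → ∀ j, MeasurableSet[M] (α n j) := by
      intro M hM hcl hmM n hn j
      have hAM : A 0 ≤ M := le_sup_right.trans hmM
      have hPM : MeasurableSet[M] P := hAM _ hPA
      have hcM : ∀ v, MeasurableSet[M] (c v) := fun v =>
        hmM _ ((le_sup_left : sigmaG G (range c) ≤ sigmaG G (range c) ⊔ A 0) _ (mem_sigmaG (mem_range_self v)))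
      have hl'M : ∀ k i, MeasurableSet[M] (lab' k ⁻¹' {i}) := by
        intro k i
        refine hcl (⋃ v : ℕ →₀ ℕ, ⋃ (_ : v k = i), c v) _
          (MeasurableSet.iUnion fun v => MeasurableSet.iUnion fun _ => hcM v) ?_
        filter_upwards [hcoded] with x hx
        simp only [mem_preimage, mem_singleton_iff, mem_iUnion, c, exists_prop]
        rw [hx k]
        constructor
        · intro h; exact ⟨γ x, h, rfl⟩
        · rintro ⟨v, hv, rfl⟩; exact hv
      have hYM : MeasurableSet[M] Y := by
        have : Y = P ∩ lab' 0 ⁻¹' {1} := by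
          ext x
          by_cases hxP : x ∈ P
          · by_cases hxY : x ∈ Y <;> simp [lab', hxP, hxY]
          · have : x ∉ Y := fun h => hxP (hYP h)
            simp [hxP, this]
        rw [this]
        exact MeasurableSet.inter hPM (hl'M 0 1)
      have hlM : ∀ k i, MeasurableSet[M] (lab k ⁻¹' {i}) := by
        intro k i
        have : lab k ⁻¹' {i} = (P ∩ {x | i = 0}) ∪ (Pᶜ ∩ lab' k ⁻¹' {i}) := by
          ext x
          by_cases hxP : x ∈ P
          · simp [hxP, hlab0 k x hxP, eq_comm]
          · simp [hxP, lab']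
        rw [this]
        exact MeasurableSet.union (MeasurableSet.inter hPM (MeasurableSet.const _))
          (MeasurableSet.inter (MeasurableSet.compl hPM) (hl'M k i))
      have h1 := hdec n M hM hcl hn (hlM n) j
      have h2 := hop M hAM hM hYM n j
      have hYsM : MeasurableSet[M] (satur G Y) := hAM _ hYsA
      have h3 : MeasurableSet[M] (O n j) := hn _ (hO n j)
      refine hcl ((α n j ∩ Pᶜ) ∪ ((α n j ∩ satur G Y) ∪
        (O n j ∩ (P ∩ (satur G Y)ᶜ)))) _
        (MeasurableSet.union h1 (MeasurableSet.union h2 (MeasurableSet.inter h3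
          (MeasurableSet.inter hPM (MeasurableSet.compl hYsM))))) ?_
      filter_upwards [hOae n j] with x hx
      by_cases hxP : x ∈ P
      · by_cases hxY : x ∈ satur G Y
        · simp [hxP, hxY]
        · have := hx hxP hxY
          simp [hxP, hxY, this]
      · have hxY : x ∉ satur G Y := fun h => hxP (hYs h)
        simp [hxP, hxY]
    intro n
    induction n with
    | zero =>
      intro s hs
      exact le_evm s ((le_sup_right : A 0 ≤ sigmaG G (range c) ⊔ A 0) s hs)
    | succ n ih =>
      refine step_evm hpmp hm1inv Measure.AbsolutelyContinuous.rfl (hst n) ih ?_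
      exact key _ (invariant_evm hpmp hm1inv) (fun s t hs h => evm_congr hs h) le_evm n ih


lemma pick {G X : Type*} {S' F' : MeasurableSpace X} [Group G] [MulAction G X]
    [mX : MeasurableSpace X] {μ : Measure X} (h : outerRokhlinAlg G S' F' μ ≠ ⊤)
    {ε : ℝ≥0∞} (hε : ε ≠ 0) :
    ∃ α : ℕ → Set X, IsPartition α ∧
      condEnt (F' ⊔ invSigma G X) μ α ≤ outerRokhlinAlg G S' F' μ + ε ∧
      ∀ s, MeasurableSet[S'] s →
        MeasurableSet[evm (mX := mX) (sigmaG G (range α) ⊔ (F' ⊔ invSigma G X)) μ] s := by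
  have hlt : outerRokhlinAlg G S' F' μ < outerRokhlinAlg G S' F' μ + ε :=
    ENNReal.lt_add_right h hε
  obtain ⟨_, ⟨α, hα, hs, rfl⟩, hα2⟩ := sInf_lt_iff.1 hlt
  refine ⟨α, hα, hα2.le, fun s hs' => ?_⟩
  obtain ⟨t, ht, hst⟩ := hs s hs'
  rw [sup_assoc] at ht
  exact ⟨t, ht, measure_symmDiff_eq_zero_iff.1 hst⟩

lemma main_lemma {G X : Type*} (F : MeasurableSpace X) (S : ℕ → MeasurableSpace X)
    [Group G] [Countable G] [mX : MeasurableSpace X] [StandardBorelSpace X] [MulAction G X]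
    (μ : Measure X) [IsProbabilityMeasure μ] (hpmp : IsPmp G μ)
    (ξ : Set (Set X))
    (hF : F ≤ mX) (hFinv : InvariantAlg G F)
    (hmono : Monotone S) (hle : ∀ n, S n ≤ mX)
    (hgen : SubsetMod ((⨆ n, S n) ⊔ F) μ ξ) :
    outerRokhlin G ξ F μ ≤
      outerRokhlinAlg G (S 0) F μ +
        ∑' n : ℕ, outerRokhlinAlg G (S (n + 1)) (S n ⊔ F) μ := by
  let F2 : ℕ → MeasurableSpace X := fun n => Nat.casesOn n F (fun k => S k ⊔ F)
  let r : ℕ → ℝ≥0∞ := fun n => outerRokhlinAlg G (S n) (F2 n) μ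
  have hr : outerRokhlinAlg G (S 0) F μ +
      ∑' n : ℕ, outerRokhlinAlg G (S (n + 1)) (S n ⊔ F) μ = ∑' n, r n := by
    exact (tsum_eq_zero_add' (f := r) ENNReal.summable).symm
  rw [hr]
  by_cases htop : ∑' n, r n = ⊤
  · rw [htop]; exact le_top
  refine ENNReal.le_of_forall_pos_le_add fun δ hδ _ => ?_
  have hδ4 : (δ : ℝ≥0∞) / 4 ≠ 0 := by
    simp [hδ.ne']
  obtain ⟨ε, hε, hεs⟩ := ENNReal.exists_pos_sum_of_countable hδ4 ℕ
  have hrn : ∀ n, r n ≠ ⊤ := fun n => ENNReal.ne_top_of_tsum_ne_top htop n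
  have hpick := fun n => pick (hrn n) (ε := (ε n : ℝ≥0∞)) (by simpa using (hε n).ne')
  choose α hα hαe hαs using hpick
  let A : ℕ → MeasurableSpace X := fun n => F2 n ⊔ invSigma G X
  have hF2 : ∀ n, F ≤ F2 n := by
    intro n; cases n with
    | zero => exact le_rfl
    | succ n => exact le_sup_right
  have hF2s : ∀ n, F2 (n + 1) = S n ⊔ F := fun n => rfl
  have hF2m : ∀ n, F2 n ≤ mX := by
    intro n; cases n with
    | zero => exact hF
    | succ n => exact sup_le (hle n) hF
  have hA : ∀ n, A n ≤ mX := fun n => sup_le (hF2m n) invSigma_le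
  have hA0 : ∀ n, A 0 ≤ A n := fun n => sup_le_sup_right (hF2 n) _
  have hst : ∀ n s, MeasurableSet[A (n + 1)] s →
      MeasurableSet[evm (mX := mX) (sigmaG G (range (α n)) ⊔ A n) μ] s := by
    intro n
    have : A (n + 1) ≤ evm (mX := mX) (sigmaG G (range (α n)) ⊔ A n) μ := by
      refine sup_le (sup_le (hαs n) ?_) ?_
      · exact ((hF2 n).trans (le_sup_left.trans le_sup_right)).trans
          (le_evm (m := sigmaG G (range (α n)) ⊔ A n))
      · exact ((le_sup_right : _ ≤ A n).trans le_sup_right).trans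
          (le_evm (m := sigmaG G (range (α n)) ⊔ A n))
    exact this
  have hεof : ∀ n, ENNReal.ofReal (ε n : ℝ) = (ε n : ℝ≥0∞) := fun n => ENNReal.ofReal_coe_nnreal
  obtain ⟨c, hcm, hcd, hcU, hce, hcg⟩ := core (A := A) hpmp hA hA0
    (InvariantAlg.sup hFinv invariant_invSigma) le_sup_right hα hst
    (fun n => ne_top_of_le_ne_top (ENNReal.add_ne_top.2 ⟨hrn n, ENNReal.coe_ne_top⟩) (hαe n))
    (ε := fun n => (ε n : ℝ)) (fun n => by exact_mod_cast hε n)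
    (by simp only [hεof]; exact (hεs.trans_le le_top).ne)
  obtain ⟨hden⟩ := nonempty_denumerable (ℕ →₀ ℕ)
  let e : ℕ ≃ (ℕ →₀ ℕ) := (Denumerable.eqv (ℕ →₀ ℕ)).symm
  have hrange : range (fun i => c (e i)) = range c := e.surjective.range_comp c
  have hent : condEnt (F ⊔ invSigma G X) μ (fun i => c (e i)) = condEnt (A 0) μ c := by
    rw [condEnt_eq, condEnt_eq]
    refine lintegral_congr fun x => ?_
    exact e.tsum_eq (fun v => eta (cpr (A 0) μ (c v) x))
  refine (sInf_le ⟨fun i => c (e i), ⟨fun i => hcm _, ?_, ?_⟩, ?_, rfl⟩ :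
    outerRokhlin G ξ F μ ≤ condEnt (F ⊔ invSigma G X) μ (fun i => c (e i))).trans ?_
  · intro i j hij
    exact hcd (fun h => hij (e.injective h))
  · rw [← hcU]; exact e.surjective.iUnion_comp c
  · intro s hs
    obtain ⟨t, ht, hst'⟩ := hgen s hs
    have hle' : (⨆ n, S n) ⊔ F ≤ evm (mX := mX) (sigmaG G (range c) ⊔ A 0) μ := by
      refine sup_le (iSup_le fun n => ?_) ?_
      · exact fun s hs => hcg (n + 1) s ((le_sup_left.trans le_sup_left : S n ≤ A (n + 1)) s hs)
      · exact fun s hs => hcg 0 s ((le_sup_left : F ≤ A 0) s hs)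
    obtain ⟨u, hu, htu⟩ := hle' t ht
    refine ⟨u, ?_, ?_⟩
    · rw [hrange, sup_assoc]; exact hu
    · exact measure_symmDiff_eq_zero_iff.2 ((measure_symmDiff_eq_zero_iff.1 hst').trans htu)
  · rw [hent]
    calc condEnt (A 0) μ c ≤ ∑' n, (condEnt (A n) μ (α n) + 3 * ENNReal.ofReal (ε n : ℝ)) := hce
      _ ≤ ∑' n, (r n + 4 * (ε n : ℝ≥0∞)) := by
          refine ENNReal.tsum_le_tsum fun n => ?_
          rw [hεof]
          calc _ ≤ (r n + ε n) + 3 * (ε n : ℝ≥0∞) := by gcongr; exact hαe n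
            _ = _ := by ring
      _ = ∑' n, r n + 4 * ∑' n, (ε n : ℝ≥0∞) := by
          rw [ENNReal.tsum_add, ENNReal.tsum_mul_left]
      _ ≤ ∑' n, r n + 4 * (δ / 4) := by gcongr
      _ = ∑' n, r n + δ := by
          rw [ENNReal.mul_div_cancel (by norm_num) (by norm_num)]

/-- Corollary 4.6, countable sub-additivity: here `S n` plays the role
of `Σ_{n+1}` of the natural-language statement. -/
theorem statement10 {G X : Type*} (F : MeasurableSpace X) [Group G] [Countable G]
    [mX : MeasurableSpace X] [StandardBorelSpace X] [MulAction G X]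
    (μ : Measure X) [IsProbabilityMeasure μ] (hpmp : IsPmp G μ)
    (ξ : Set (Set X)) (hξm : ∀ A ∈ ξ, MeasurableSet A)
    (hF : F ≤ mX) (hFinv : InvariantAlg G F)
    (S : ℕ → MeasurableSpace X) (hmono : Monotone S) (hle : ∀ n, S n ≤ mX)
    (hinv : ∀ n, InvariantAlg G (S n))
    (hgen : SubsetMod ((⨆ n, S n) ⊔ F) μ ξ) :
    outerRokhlin G ξ F μ ≤
      outerRokhlinAlg G (S 0) F μ +
        ∑' n : ℕ, outerRokhlinAlg G (S (n + 1)) (S n ⊔ F) μ := by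
  exact main_lemma F S μ hpmp ξ hF hFinv hmono hle hgen
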